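/- Main theorem: Let (A,B)_can = X_1 ⊕ ⋯ ⊕ X_t be a pair of symmetric N×N complex matrices, where each X_i is a canonical pair of the form H_{k}(λ) (λ ∈ ℂ), K_{k}, or L_{k} (L_k having size 2k+1). Define the subspace 𝒟(ℂ) of Sym_N(ℂ)×Sym_N(ℂ) consisting of all symmetric pairs (M,M') whose blocks (M_{ij},M'_{ij}) in the partition conformable to the direct sum (with M_{ji} = M_{ij}^T, M'_{ji} = M'_{ij}^T) are supported as follows. Diagonal blocks: if X_i = H_k(λ) then M_{ii} = 0 and M'_{ii} is supported on {(p,q) : |p−q| ≤ 1 and p+q ≤ k+1}; if X_i = K_k then M'_{ii} = 0 and M_{ii} is supported on {(p,q) : |p−q| ≤ 1 and p+q ≤ k+1}; if X_i = L_k then M_{ii} is supported on {(k+1,k+1)} and M'_{ii} is supported on {(p,q) : p ≤ k+1, q ≤ k+1, |p−q| ≤ 1}. Off-diagonal blocks between summands of the same type (rows indexed by a summand of size parameter k, columns by one of size parameter l): for H_k(λ) versus H_l(μ) with λ ≠ μ both blocks are 0; for H_k(λ) versus H_l(λ), M-block is 0 and M'-block is supported on {(p,1) : p ≤ min(k,l)};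 for K_k versus K_l, M'-block is 0 and M-block is supported on {(p,1) : p ≤ min(k,l)}; for L_k versus L_l (block size (2k+1)×(2l+1)), the M-block is supported on {(k+1, l+1)} and the M'-block is supported on {(1,q) : q ≤ l+1} ∪ {(p, l+1) : p ≤ k+1} ∪ {(k+1, l+1+q) : k+1 ≤ q ≤ l−1} ∪ {(k+1+p, l+1) : l+1 ≤ p ≤ k−1}. Off-diagonal blocks between summands of different types (rows indexed by the first-named summand): for H_k(λ) versus K_l both blocks are 0; for H_k(λ) versus L_l (block size k×(2l+1)), M-block is 0 and M'-block is supported on {(p,1) : 1 ≤ p ≤ k}; for K_k versus L_l (block size k×(2l+1)), M'-block is 0 and M-block is supported on {(p, l+1) : 1 ≤ p ≤ k}. Then Sym_N(ℂ)×Sym_N(ℂ) = T((A,B)_can) ⊕ 𝒟(ℂ); equivalently, the deformation (X,Y) ↦ (A_can + X, B_can + Y) parametrized by 𝒟(ℂ) is a (simplest) miniversal deformation of (A,B)_can under congruence. -/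

import Mathlib

open Matrix Filter

noncomputable section

attribute [local instance] Matrix.normedAddCommGroup Matrix.normedSpace

/-- The space of pairs of symmetric `ι × ι` complex matrices, as a subspace of all pairs. -/
def SymPair (ι : Type) [Fintype ι] : Submodule ℂ (Matrix ι ι ℂ × Matrix ι ι ℂ) where
  carrier := {p | p.1.IsSymm ∧ p.2.IsSymm}
  add_mem' ha hb := ⟨ha.1.add hb.1, ha.2.add hb.2⟩
  zero_mem' := ⟨Matrix.isSymm_zero, Matrix.isSymm_zero⟩
  smul_mem' c p hp := ⟨hp.1.smul c, hp.2.smul c⟩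

/-- The linear map `C ↦ (CᵀA + AC, CᵀB + BC)`. -/
def congMap {ι : Type} [Fintype ι] (A B : Matrix ι ι ℂ) :
    Matrix ι ι ℂ →ₗ[ℂ] Matrix ι ι ℂ × Matrix ι ι ℂ where
  toFun C := (Cᵀ * A + A * C, Cᵀ * B + B * C)
  map_add' C D := by
    simp only [Matrix.transpose_add, Matrix.add_mul, Matrix.mul_add, Prod.mk_add_mk, Prod.ext_iff]
    constructor <;> abel
  map_smul' c C := by
    simp only [Matrix.transpose_smul, Matrix.smul_mul, Matrix.mul_smul, RingHom.id_apply,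
      Prod.smul_mk, smul_add]

/-- `T(A,B) = {(CᵀA + AC, CᵀB + BC) : C}`, the tangent space to the congruence class. -/
def TSpace {ι : Type} [Fintype ι] (A B : Matrix ι ι ℂ) :
    Submodule ℂ (Matrix ι ι ℂ × Matrix ι ι ℂ) :=
  LinearMap.range (congMap A B)

/-- The pattern space determined by two sets of positions: pairs of symmetric matrices
supported on `I1` resp. `I2`. -/
def Pattern {ι : Type} [Fintype ι] (I1 I2 : Set (ι × ι)) :
    Submodule ℂ (Matrix ι ι ℂ × Matrix ι ι ℂ) where
  carrier := {p | p.1.IsSymm ∧ p.2.IsSymm ∧ (∀ i j, (i, j) ∉ I1 → p.1 i j = 0) ∧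
    (∀ i j, (i, j) ∉ I2 → p.2 i j = 0)}
  add_mem' := by
    rintro a b ⟨ha1, ha2, ha3, ha4⟩ ⟨hb1, hb2, hb3, hb4⟩
    exact ⟨ha1.add hb1, ha2.add hb2,
      fun i j h => by show a.1 i j + b.1 i j = 0; rw [ha3 i j h, hb3 i j h, add_zero],
      fun i j h => by show a.2 i j + b.2 i j = 0; rw [ha4 i j h, hb4 i j h, add_zero]⟩
  zero_mem' := ⟨Matrix.isSymm_zero, Matrix.isSymm_zero, fun _ _ _ => rfl, fun _ _ _ => rfl⟩
  smul_mem' := by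
    rintro c a ⟨ha1, ha2, ha3, ha4⟩
    exact ⟨ha1.smul c, ha2.smul c,
      fun i j h => by show c * a.1 i j = 0; rw [ha3 i j h, mul_zero],
      fun i j h => by show c * a.2 i j = 0; rw [ha4 i j h, mul_zero]⟩

theorem Pattern_le {ι : Type} [Fintype ι] (I1 I2 : Set (ι × ι)) :
    Pattern I1 I2 ≤ SymPair ι := fun _ hp => ⟨hp.1, hp.2.1⟩

/-- A deformation of a pair `(A, B)` of symmetric `ι × ι` complex matrices, with parameter
space `P`: a map defined near `0 : P`, holomorphic at `0` (i.e. each matrix entry is an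
analytic function of the parameter at `0`), taking values in pairs of symmetric matrices,
and sending `0` to `(A, B)`. -/
structure Deformation (ι : Type) [Fintype ι] (P : Type*) [NormedAddCommGroup P]
    [NormedSpace ℂ P] (A B : Matrix ι ι ℂ) where
  map : P → Matrix ι ι ℂ × Matrix ι ι ℂ
  analytic₁ : ∀ i j, AnalyticAt ℂ (fun p => (map p).1 i j) 0
  analytic₂ : ∀ i j, AnalyticAt ℂ (fun p => (map p).2 i j) 0
  symm : ∀ᶠ p in nhds (0 : P), (map p).1.IsSymm ∧ (map p).2.IsSymm
  init : map 0 = (A, B)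

/-- Two (maps underlying) deformations with the same parameter space are equivalent if
`g p = (I p)ᵀ • f p • (I p)` near `0`, for a family `I` of matrices holomorphic at `0`
with `I 0 = 1`. -/
def DefEquiv {ι : Type} [Fintype ι] [DecidableEq ι] {P : Type*} [NormedAddCommGroup P]
    [NormedSpace ℂ P] (f g : P → Matrix ι ι ℂ × Matrix ι ι ℂ) : Prop :=
  ∃ I : P → Matrix ι ι ℂ, (∀ i j, AnalyticAt ℂ (fun p => I p i j) 0) ∧ I 0 = 1 ∧
    ∀ᶠ p in nhds (0 : P), g p = ((I p)ᵀ * (f p).1 * I p, (I p)ᵀ * (f p).2 * I p)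

/-- A deformation is versal if every deformation of the same pair (with a finite-dimensional
parameter space) is equivalent to a holomorphic reparametrization of it. -/
def IsVersal {ι : Type} [Fintype ι] [DecidableEq ι] {P : Type*} [NormedAddCommGroup P]
    [NormedSpace ℂ P] {A B : Matrix ι ι ℂ} (𝒜 : Deformation ι P A B) : Prop :=
  ∀ (Q : Type) (_ : NormedAddCommGroup Q), ∀ (_ : NormedSpace ℂ Q)
    (_ : FiniteDimensional ℂ Q) (ℬ : Deformation ι Q A B),
    ∃ φ : Q → P, AnalyticAt ℂ φ 0 ∧ φ 0 = 0 ∧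
      DefEquiv (fun q => 𝒜.map (φ q)) ℬ.map

/-- A versal deformation is miniversal if its parameter space has the minimal possible
dimension among versal deformations. -/
def IsMiniversal {ι : Type} [Fintype ι] [DecidableEq ι] {P : Type*} [NormedAddCommGroup P]
    [NormedSpace ℂ P] {A B : Matrix ι ι ℂ} (𝒜 : Deformation ι P A B) : Prop :=
  IsVersal 𝒜 ∧ ∀ (Q : Type) (_ : NormedAddCommGroup Q), ∀ (_ : NormedSpace ℂ Q)
    (_ : FiniteDimensional ℂ Q) (ℬ : Deformation ι Q A B),
    IsVersal ℬ → Module.finrank ℂ P ≤ Module.finrank ℂ Q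

/-- Entry evaluation is analytic on a finite-dimensional parameter space of matrix pairs. -/
theorem analyticAt_entry {ι : Type} [Fintype ι]
    (D : Submodule ℂ (Matrix ι ι ℂ × Matrix ι ι ℂ)) (i j : ι) :
    AnalyticAt ℂ (fun p : D => ((p : Matrix ι ι ℂ × Matrix ι ι ℂ)).1 i j) 0 ∧
    AnalyticAt ℂ (fun p : D => ((p : Matrix ι ι ℂ × Matrix ι ι ℂ)).2 i j) 0 := by
  constructor
  · let L : D →ₗ[ℂ] ℂ :=
      { toFun := fun p => (p : Matrix ι ι ℂ × Matrix ι ι ℂ).1 i j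
        map_add' := fun x y => rfl
        map_smul' := fun c x => rfl }
    exact (LinearMap.toContinuousLinearMap L).analyticAt 0
  · let L : D →ₗ[ℂ] ℂ :=
      { toFun := fun p => (p : Matrix ι ι ℂ × Matrix ι ι ℂ).2 i j
        map_add' := fun x y => rfl
        map_smul' := fun c x => rfl }
    exact (LinearMap.toContinuousLinearMap L).analyticAt 0

/-- The deformation `(X, Y) ↦ (A + X, B + Y)` of `(A, B)`, parametrized by a subspace `D`
of the space of pairs of symmetric matrices. -/
def patternDeformation {ι : Type} [Fintype ι] (A B : Matrix ι ι ℂ)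
    (hA : A.IsSymm) (hB : B.IsSymm) (D : Submodule ℂ (Matrix ι ι ℂ × Matrix ι ι ℂ))
    (hD : D ≤ SymPair ι) : Deformation ι D A B where
  map p := (A + (p : Matrix ι ι ℂ × Matrix ι ι ℂ).1, B + (p : Matrix ι ι ℂ × Matrix ι ι ℂ).2)
  analytic₁ i j := by
    have h := (analyticAt_entry D i j).1
    have : (fun p : D => (A + (p : Matrix ι ι ℂ × Matrix ι ι ℂ).1) i j)
        = fun p : D => A i j + (p : Matrix ι ι ℂ × Matrix ι ι ℂ).1 i j := rfl
    rw [this]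
    exact analyticAt_const.add h
  analytic₂ i j := by
    have h := (analyticAt_entry D i j).2
    have : (fun p : D => (B + (p : Matrix ι ι ℂ × Matrix ι ι ℂ).2) i j)
        = fun p : D => B i j + (p : Matrix ι ι ℂ × Matrix ι ι ℂ).2 i j := rfl
    rw [this]
    exact analyticAt_const.add h
  symm := Eventually.of_forall fun p =>
    ⟨hA.add (hD p.2).1, hB.add (hD p.2).2⟩
  init := by simp

end

noncomputable section

attribute [local instance] Matrix.normedAddCommGroup Matrix.normedSpace

/-- `Λ_n(λ)`: the `n × n` matrix with `(i,j)` entry `λ` if `i + j = n + 1`, `1` if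
`i + j = n + 2`, and `0` otherwise (1-based indices). -/
def lamM (n : ℕ) (lam : ℂ) : Matrix (Fin n) (Fin n) ℂ :=
  Matrix.of fun i j =>
    if (i : ℕ) + 1 + ((j : ℕ) + 1) = n + 1 then lam
    else if (i : ℕ) + 1 + ((j : ℕ) + 1) = n + 2 then 1 else 0

/-- `Δ_n`: the `n × n` matrix with `(i,j)` entry `1` if `i + j = n + 1` and `0`
otherwise (1-based indices). -/
def delM (n : ℕ) : Matrix (Fin n) (Fin n) ℂ :=
  Matrix.of fun i j => if (i : ℕ) + 1 + ((j : ℕ) + 1) = n + 1 then 1 else 0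

/-- `F_n`: the `n × (n+1)` matrix with `F_n(i,j) = 1` exactly when `j = i`. -/
def FM (n : ℕ) : Matrix (Fin n) (Fin (n + 1)) ℂ :=
  Matrix.of fun i j => if (j : ℕ) = (i : ℕ) then 1 else 0

/-- `G_n`: the `n × (n+1)` matrix with `G_n(i,j) = 1` exactly when `j = i + 1`. -/
def GM (n : ℕ) : Matrix (Fin n) (Fin (n + 1)) ℂ :=
  Matrix.of fun i j => if (j : ℕ) = (i : ℕ) + 1 then 1 else 0

/-- `L_n^{(1)} = [[0, F_nᵀ], [F_n, 0]]`, a symmetric `(2n+1) × (2n+1)` matrix. -/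
def L1M (n : ℕ) : Matrix (Fin (2 * n + 1)) (Fin (2 * n + 1)) ℂ :=
  Matrix.reindex (finSumFinEquiv.trans (finCongr (by omega)))
    (finSumFinEquiv.trans (finCongr (by omega)))
    (Matrix.fromBlocks 0 (FM n)ᵀ (FM n) 0)

/-- `L_n^{(2)} = [[0, G_nᵀ], [G_n, 0]]`, a symmetric `(2n+1) × (2n+1)` matrix. -/
def L2M (n : ℕ) : Matrix (Fin (2 * n + 1)) (Fin (2 * n + 1)) ℂ :=
  Matrix.reindex (finSumFinEquiv.trans (finCongr (by omega)))
    (finSumFinEquiv.trans (finCongr (by omega)))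
    (Matrix.fromBlocks 0 (GM n)ᵀ (GM n) 0)

theorem lamM_isSymm (n : ℕ) (lam : ℂ) : (lamM n lam).IsSymm := by
  unfold Matrix.IsSymm lamM
  ext i j
  simp only [Matrix.transpose_apply, Matrix.of_apply]
  split_ifs <;> first | rfl | omega

theorem delM_isSymm (n : ℕ) : (delM n).IsSymm := by
  unfold Matrix.IsSymm delM
  ext i j
  simp only [Matrix.transpose_apply, Matrix.of_apply]
  split_ifs <;> first | rfl | omega

theorem L1M_isSymm (n : ℕ) : (L1M n).IsSymm := by
  unfold Matrix.IsSymm L1M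
  rw [Matrix.transpose_reindex, Matrix.fromBlocks_transpose]
  simp

theorem L2M_isSymm (n : ℕ) : (L2M n).IsSymm := by
  unfold Matrix.IsSymm L2M
  rw [Matrix.transpose_reindex, Matrix.fromBlocks_transpose]
  simp

/-- The type of canonical summands: `H_k(λ)`, `K_k`, `L_k`. -/
inductive CanType where
  | H : ℕ → ℂ → CanType
  | K : ℕ → CanType
  | L : ℕ → CanType

/-- The size of a canonical pair. -/
def CanType.size : CanType → ℕ
  | .H k _ => k
  | .K k => k
  | .L k => 2 * k + 1

/-- The size parameter of a canonical pair. -/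
def CanType.param : CanType → ℕ
  | .H k _ => k
  | .K k => k
  | .L k => k

/-- The first matrix of a canonical pair. -/
def CanType.A : (c : CanType) → Matrix (Fin c.size) (Fin c.size) ℂ
  | .H k _ => delM k
  | .K k => lamM k 0
  | .L k => L1M k

/-- The second matrix of a canonical pair. -/
def CanType.B : (c : CanType) → Matrix (Fin c.size) (Fin c.size) ℂ
  | .H k lam => lamM k lam
  | .K k => delM k
  | .L k => L2M k

/-- Congruence of pairs of square complex matrices (over possibly different index
types): `(A', B') = (Sᵀ A S, Sᵀ B S)` for some invertible `S`. -/
def CongruentPairs {ι κ : Type} [Fintype ι] [Fintype κ] [DecidableEq ι] [DecidableEq κ]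
    (p : Matrix ι ι ℂ × Matrix ι ι ℂ) (q : Matrix κ κ ℂ × Matrix κ κ ℂ) : Prop :=
  ∃ S : Matrix ι κ ℂ, (∃ T : Matrix κ ι ℂ, S * T = 1 ∧ T * S = 1) ∧
    q.1 = Sᵀ * p.1 * S ∧ q.2 = Sᵀ * p.2 * S


theorem canA_isSymm (c : CanType) : c.A.IsSymm := by
  cases c with
  | H k lam => exact delM_isSymm k
  | K k => exact lamM_isSymm k 0
  | L k => exact L1M_isSymm k

theorem canB_isSymm (c : CanType) : c.B.IsSymm := by
  cases c with
  | H k lam => exact lamM_isSymm k lam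
  | K k => exact delM_isSymm k
  | L k => exact L2M_isSymm k

theorem blockDiagonal'_isSymm {t : ℕ} {ns : Fin t → ℕ}
    (A : ∀ i, Matrix (Fin (ns i)) (Fin (ns i)) ℂ) (hA : ∀ i, (A i).IsSymm) :
    (Matrix.blockDiagonal' A).IsSymm := by
  unfold Matrix.IsSymm
  rw [Matrix.blockDiagonal'_transpose]
  exact congrArg Matrix.blockDiagonal' (funext fun i => hA i)

/-- Support of the first matrix of a diagonal block of the miniversal deformation
(`0`-based coordinates within the block). -/
def diagSupp1 : CanType → ℕ → ℕ → Prop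
  | .H _ _ => fun _ _ => False
  | .K k => fun p q => (p ≤ q + 1 ∧ q ≤ p + 1) ∧ p + 1 + (q + 1) ≤ k + 1
  | .L k => fun p q => p = k ∧ q = k

/-- Support of the second matrix of a diagonal block of the miniversal deformation. -/
def diagSupp2 : CanType → ℕ → ℕ → Prop
  | .H k _ => fun p q => (p ≤ q + 1 ∧ q ≤ p + 1) ∧ p + 1 + (q + 1) ≤ k + 1
  | .K _ => fun _ _ => False
  | .L k => fun p q => p ≤ k ∧ q ≤ k ∧ (p ≤ q + 1 ∧ q ≤ p + 1)

/-- Support of the first matrix of the off-diagonal block between summands `c` (rows)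
and `d` (columns), for `i < j` (`0`-based coordinates within the block). -/
def offSupp1 : CanType → CanType → ℕ → ℕ → Prop
  | .K k, .K l => fun p q => q = 0 ∧ p + 1 ≤ min k l
  | .K _, .L l => fun _ q => q = l
  | .L k, .K _ => fun p _ => p = k
  | .L k, .L l => fun p q => p = k ∧ q = l
  | _, _ => fun _ _ => False

/-- Support of the second matrix of the off-diagonal block between summands `c` (rows)
and `d` (columns), for `i < j`. -/
def offSupp2 : CanType → CanType → ℕ → ℕ → Prop
  | .H k lam, .H l mu => fun p q => lam = mu ∧ q = 0 ∧ p + 1 ≤ min k l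
  | .H _ _, .L _ => fun _ q => q = 0
  | .L _, .H _ _ => fun p _ => p = 0
  | .L k, .L l => fun p q =>
      (p = 0 ∧ q ≤ l) ∨ (q = l ∧ p ≤ k) ∨
      (p = k ∧ k + l + 2 ≤ q + 1 ∧ q + 1 ≤ 2 * l) ∨
      (q = l ∧ k + l + 2 ≤ p + 1 ∧ p + 1 ≤ 2 * k)
  | _, _ => fun _ _ => False

/-- The set of positions of the stars of the first matrix of `𝒟`. -/
def canI1 {t : ℕ} (X : Fin t → CanType) :
    Set ((Σ i, Fin (X i).size) × (Σ i, Fin (X i).size)) :=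
  {x | (x.1.1 = x.2.1 ∧ diagSupp1 (X x.1.1) (x.1.2 : ℕ) (x.2.2 : ℕ)) ∨
    (x.1.1 < x.2.1 ∧ offSupp1 (X x.1.1) (X x.2.1) (x.1.2 : ℕ) (x.2.2 : ℕ)) ∨
    (x.2.1 < x.1.1 ∧ offSupp1 (X x.2.1) (X x.1.1) (x.2.2 : ℕ) (x.1.2 : ℕ))}

/-- The set of positions of the stars of the second matrix of `𝒟`. -/
def canI2 {t : ℕ} (X : Fin t → CanType) :
    Set ((Σ i, Fin (X i).size) × (Σ i, Fin (X i).size)) :=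
  {x | (x.1.1 = x.2.1 ∧ diagSupp2 (X x.1.1) (x.1.2 : ℕ) (x.2.2 : ℕ)) ∨
    (x.1.1 < x.2.1 ∧ offSupp2 (X x.1.1) (X x.2.1) (x.1.2 : ℕ) (x.2.2 : ℕ)) ∨
    (x.2.1 < x.1.1 ∧ offSupp2 (X x.2.1) (X x.1.1) (x.2.2 : ℕ) (x.1.2 : ℕ))}

/-!
Under the trace pairing, the orthogonal complement of `T(A, B)` in the space of symmetric pairs is
the space of symmetric solutions `(P, Q)` of `A P + B Q = 0`. Hence `𝒟` is a complement of
`T(A, B)` if such a solution is determined by its entries at the star positions and these entries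
can be prescribed freely.

For a direct sum the equation `A P + B Q = 0` together with its transpose decouples into one system
for each pair of summands. Each block splits further into strips, on which the equations are
first-order recurrences: they either force a strip to vanish or determine it by a row, a column or
both. In a diagonal block the strip with the free positions is constant along antidiagonals, so
that these positions can be moved along antidiagonals next to the diagonal.

By the inverse function theorem, applied to `(C, p) ↦ (1 + C)ᵀ ((A, B) + p) (1 + C)` at `0`, a
complement of the tangent space parametrizes a miniversal deformation.
-/

section Duality

/-- A set of positions `(I₁, I₂)` is a coordinate set for the family `S` of pairs of matrices, with
values in `V`, if an element of `S` is determined by its entries at these positions and those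
entries can be prescribed to be those of any element of `V`. -/
structure IsCoordinateSet {m n R : Type*} [Zero R] (S V : Set (Matrix m n R × Matrix m n R))
    (I₁ I₂ : Set (m × n)) : Prop where
  eq_zero : ∀ p ∈ S, (∀ i j, (i, j) ∈ I₁ → p.1 i j = 0) →
    (∀ i j, (i, j) ∈ I₂ → p.2 i j = 0) → p = 0
  exists_eq : ∀ e ∈ V, ∃ p ∈ S, (∀ i j, (i, j) ∈ I₁ → p.1 i j = e.1 i j) ∧
    ∀ i j, (i, j) ∈ I₂ → p.2 i j = e.2 i j

lemma IsCoordinateSet.congr {m n R : Type*} [Zero R] {S V : Set (Matrix m n R × Matrix m n R)}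
    {I₁ I₂ J₁ J₂ : Set (m × n)} (h : IsCoordinateSet S V I₁ I₂)
    (h₁ : ∀ i j, (i, j) ∈ I₁ ↔ (i, j) ∈ J₁) (h₂ : ∀ i j, (i, j) ∈ I₂ ↔ (i, j) ∈ J₂) :
    IsCoordinateSet S V J₁ J₂ := by
  rwa [show J₁ = I₁ from Set.ext fun x => (h₁ x.1 x.2).symm,
    show J₂ = I₂ from Set.ext fun x => (h₂ x.1 x.2).symm]

lemma isSymm_single_add_single {n α : Type*} [DecidableEq n] [AddCommMonoid α] (i j : n) (c : α) :
    (single i j c + single j i c).IsSymm := by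
  rw [IsSymm, transpose_add, transpose_single, transpose_single, add_comm]

lemma single_add_single_apply_of_notMem {n α : Type*} [DecidableEq n] [AddCommMonoid α]
    {I : Set (n × n)} (hI : ∀ i j, (i, j) ∈ I → (j, i) ∈ I) {i j a b : n} (hij : (i, j) ∈ I)
    (hab : (a, b) ∉ I) (c : α) : (single i j c + single j i c) a b = 0 := by
  rw [Matrix.add_apply, single_apply_of_ne, single_apply_of_ne, add_zero]
  · rintro ⟨rfl, rfl⟩
    exact hab (hI _ _ hij)
  · rintro ⟨rfl, rfl⟩
    exact hab hij

variable {ι : Type} [Fintype ι]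

/-- The trace pairing `⟨p, q⟩ = tr (p₁ q₁) + tr (p₂ q₂)` on pairs of matrices. -/
def tracePairing (ι : Type) [Fintype ι] :
    LinearMap.BilinForm ℂ (Matrix ι ι ℂ × Matrix ι ι ℂ) :=
  LinearMap.mk₂ ℂ (fun p q => trace (p.1 * q.1) + trace (p.2 * q.2))
    (fun p p' q => by simp only [Prod.fst_add, Prod.snd_add, add_mul, trace_add]; ring)
    (fun c p q => by simp only [Prod.smul_fst, Prod.smul_snd, smul_mul, trace_smul, smul_add])
    (fun p q q' => by simp only [Prod.fst_add, Prod.snd_add, mul_add, trace_add]; ring)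
    (fun c p q => by
      simp only [Prod.smul_fst, Prod.smul_snd, Matrix.mul_smul, trace_smul, smul_add])

lemma tracePairing_apply (p q : Matrix ι ι ℂ × Matrix ι ι ℂ) :
    tracePairing ι p q = trace (p.1 * q.1) + trace (p.2 * q.2) := rfl

lemma tracePairing_comm (p q : Matrix ι ι ℂ × Matrix ι ι ℂ) :
    tracePairing ι p q = tracePairing ι q p := by
  rw [tracePairing_apply, tracePairing_apply, trace_mul_comm, trace_mul_comm p.2]

lemma tracePairing_isRefl : (tracePairing ι).IsRefl := fun p q h => by
  rw [tracePairing_comm, h]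

lemma eq_zero_of_forall_tracePairing_eq_zero {p : Matrix ι ι ℂ × Matrix ι ι ℂ}
    (h : ∀ q, tracePairing ι p q = 0) : p = 0 := by
  refine Prod.ext (ext_iff_trace_mul_right.2 fun M => ?_) (ext_iff_trace_mul_right.2 fun M => ?_)
  · simpa [tracePairing_apply] using h (M, 0)
  · simpa [tracePairing_apply] using h (0, M)

lemma tracePairing_nondegenerate : (tracePairing ι).Nondegenerate :=
  ⟨fun _ h => eq_zero_of_forall_tracePairing_eq_zero h,
    fun p h => eq_zero_of_forall_tracePairing_eq_zero fun q => by rw [tracePairing_comm, h q]⟩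

/-- The orthogonal complement of `T(A, B)` in the space of symmetric pairs under the trace pairing,
described by its equation `A P + B Q = 0`. -/
def tangentAnnihilator (A B : Matrix ι ι ℂ) : Set (Matrix ι ι ℂ × Matrix ι ι ℂ) :=
  {p | p ∈ SymPair ι ∧ A * p.1 + B * p.2 = 0}

variable {A B : Matrix ι ι ℂ}

lemma tracePairing_congMap (hA : A.IsSymm) (hB : B.IsSymm) {p : Matrix ι ι ℂ × Matrix ι ι ℂ}
    (hp : p ∈ SymPair ι) (C : Matrix ι ι ℂ) :
    tracePairing ι p (congMap A B C) = 2 * trace ((A * p.1 + B * p.2) * Cᵀ) := by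
  have key : ∀ {M P : Matrix ι ι ℂ}, M.IsSymm → P.IsSymm →
      trace (P * (Cᵀ * M + M * C)) = 2 * trace (M * P * Cᵀ) := by
    intro M P hM hP
    have hleft : trace (P * (Cᵀ * M)) = trace (M * P * Cᵀ) := by
      rw [← Matrix.mul_assoc, trace_mul_comm, ← Matrix.mul_assoc]
    have hright : trace (P * (M * C)) = trace (P * (Cᵀ * M)) := by
      rw [← trace_transpose, transpose_mul, transpose_mul, hM, hP, trace_mul_comm]
    rw [Matrix.mul_add, trace_add, hright, hleft, two_mul]
  rw [tracePairing_apply, Matrix.add_mul, trace_add, mul_add]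
  exact congrArg₂ (· + ·) (key hA hp.1) (key hB hp.2)

lemma mem_tangentAnnihilator_iff (hA : A.IsSymm) (hB : B.IsSymm)
    {p : Matrix ι ι ℂ × Matrix ι ι ℂ} (hp : p ∈ SymPair ι) :
    p ∈ tangentAnnihilator A B ↔ ∀ x ∈ TSpace A B, tracePairing ι p x = 0 := by
  simp only [tangentAnnihilator, Set.mem_ofPred_eq, hp, true_and, TSpace, LinearMap.mem_range,
    forall_exists_index, forall_apply_eq_imp_iff, tracePairing_congMap hA hB hp]
  refine ⟨fun h C => by simp [h], fun h => ext_iff_trace_mul_right.2 fun C => ?_⟩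
  simpa using h Cᵀ

lemma TSpace_le_SymPair (hA : A.IsSymm) (hB : B.IsSymm) : TSpace A B ≤ SymPair ι := by
  rintro _ ⟨C, rfl⟩
  constructor <;>
    simp only [congMap, LinearMap.coe_mk, AddHom.coe_mk, IsSymm, transpose_add, transpose_mul,
      transpose_transpose, hA.eq, hB.eq, add_comm]

/-- Twice the symmetric part of a pair of matrices. -/
def symmetrize (p : Matrix ι ι ℂ × Matrix ι ι ℂ) : Matrix ι ι ℂ × Matrix ι ι ℂ :=
  (p.1 + p.1ᵀ, p.2 + p.2ᵀ)

lemma symmetrize_mem_SymPair (p : Matrix ι ι ℂ × Matrix ι ι ℂ) : symmetrize p ∈ SymPair ι :=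
  ⟨isSymm_add_transpose_self _, isSymm_add_transpose_self _⟩

lemma tracePairing_symmetrize (p : Matrix ι ι ℂ × Matrix ι ι ℂ) {x : Matrix ι ι ℂ × Matrix ι ι ℂ}
    (hx : x ∈ SymPair ι) : tracePairing ι (symmetrize p) x = 2 * tracePairing ι p x := by
  have key : ∀ {M P : Matrix ι ι ℂ}, P.IsSymm → trace ((M + Mᵀ) * P) = 2 * trace (M * P) := by
    intro M P hP
    rw [Matrix.add_mul, trace_add, ← trace_transpose (Mᵀ * P), transpose_mul, hP.eq,
      transpose_transpose, trace_mul_comm P, two_mul]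
  rw [tracePairing_apply, tracePairing_apply, mul_add]
  exact congrArg₂ (· + ·) (key hx.1) (key hx.2)

lemma eq_zero_of_forall_mem_SymPair {x : Matrix ι ι ℂ × Matrix ι ι ℂ} (hx : x ∈ SymPair ι)
    (h : ∀ e ∈ SymPair ι, tracePairing ι e x = 0) : x = 0 := by
  refine eq_zero_of_forall_tracePairing_eq_zero fun q => ?_
  have := h _ (symmetrize_mem_SymPair q)
  rw [tracePairing_symmetrize q hx] at this
  rw [tracePairing_comm]
  exact (mul_eq_zero_iff_left two_ne_zero).1 this

variable {I₁ I₂ : Set (ι × ι)}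

lemma tracePairing_congr_of_mem_Pattern {p q x : Matrix ι ι ℂ × Matrix ι ι ℂ}
    (h₁ : ∀ i j, (i, j) ∈ I₁ → p.1 i j = q.1 i j) (h₂ : ∀ i j, (i, j) ∈ I₂ → p.2 i j = q.2 i j)
    (hx : x ∈ Pattern I₁ I₂) : tracePairing ι p x = tracePairing ι q x := by
  obtain ⟨hs₁, hs₂, hx₁, hx₂⟩ := hx
  simp only [tracePairing_apply, trace, diag_apply, mul_apply]
  congr 1 <;> refine Finset.sum_congr rfl fun i _ => Finset.sum_congr rfl fun j _ => ?_
  · by_cases h : (i, j) ∈ I₁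
    · rw [h₁ i j h]
    · rw [hs₁.apply, hx₁ i j h, mul_zero, mul_zero]
  · by_cases h : (i, j) ∈ I₂
    · rw [h₂ i j h]
    · rw [hs₂.apply, hx₂ i j h, mul_zero, mul_zero]

lemma trace_mul_single_add_single [DecidableEq ι] {P : Matrix ι ι ℂ} (hP : P.IsSymm) (i j : ι) :
    trace (P * (single i j 1 + single j i 1)) = 2 * P i j := by
  rw [Matrix.mul_add, trace_add, trace_mul_single, trace_mul_single, hP.apply, MulOpposite.op_one,
    one_smul, two_mul]

lemma apply_eq_zero_of_orthogonal_Pattern {s : Matrix ι ι ℂ × Matrix ι ι ℂ} (hs : s ∈ SymPair ι)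
    (h : ∀ x ∈ Pattern I₁ I₂, tracePairing ι s x = 0)
    (hI₁ : ∀ i j, (i, j) ∈ I₁ → (j, i) ∈ I₁) (hI₂ : ∀ i j, (i, j) ∈ I₂ → (j, i) ∈ I₂) :
    (∀ i j, (i, j) ∈ I₁ → s.1 i j = 0) ∧ ∀ i j, (i, j) ∈ I₂ → s.2 i j = 0 := by
  classical
  refine ⟨fun i j hij => ?_, fun i j hij => ?_⟩
  · have := h (single i j 1 + single j i 1, 0) ⟨isSymm_single_add_single i j 1, isSymm_zero,
      fun _ _ h => single_add_single_apply_of_notMem hI₁ hij h 1, fun _ _ _ => rfl⟩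
    rw [tracePairing_apply, Matrix.mul_zero, trace_zero, add_zero,
      trace_mul_single_add_single hs.1] at this
    exact (mul_eq_zero_iff_left two_ne_zero).1 this
  · have := h (0, single i j 1 + single j i 1) ⟨isSymm_zero, isSymm_single_add_single i j 1,
      fun _ _ _ => rfl, fun _ _ h => single_add_single_apply_of_notMem hI₂ hij h 1⟩
    rw [tracePairing_apply, Matrix.mul_zero, trace_zero, zero_add,
      trace_mul_single_add_single hs.2] at this
    exact (mul_eq_zero_iff_left two_ne_zero).1 this

theorem disjoint_TSpace_Pattern (hA : A.IsSymm) (hB : B.IsSymm)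
    (h : IsCoordinateSet (tangentAnnihilator A B) (SymPair ι) I₁ I₂) :
    Disjoint (TSpace A B) (Pattern I₁ I₂) := by
  refine Submodule.disjoint_def.2 fun x hT hD =>
    eq_zero_of_forall_mem_SymPair (Pattern_le _ _ hD) fun e he => ?_
  obtain ⟨p, hp, hp₁, hp₂⟩ := h.exists_eq e he
  rw [← tracePairing_congr_of_mem_Pattern hp₁ hp₂ hD]
  exact (mem_tangentAnnihilator_iff hA hB hp.1).1 hp x hT

theorem TSpace_sup_Pattern (hA : A.IsSymm) (hB : B.IsSymm)
    (hI₁ : ∀ i j, (i, j) ∈ I₁ → (j, i) ∈ I₁) (hI₂ : ∀ i j, (i, j) ∈ I₂ → (j, i) ∈ I₂)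
    (h : IsCoordinateSet (tangentAnnihilator A B) (SymPair ι) I₁ I₂) :
    TSpace A B ⊔ Pattern I₁ I₂ = SymPair ι := by
  refine le_antisymm (sup_le (TSpace_le_SymPair hA hB) (Pattern_le _ _)) fun x hx => ?_
  rw [← LinearMap.BilinForm.orthogonal_orthogonal tracePairing_nondegenerate tracePairing_isRefl
    (TSpace A B ⊔ Pattern I₁ I₂)]
  intro p hp
  have horth : ∀ y ∈ TSpace A B ⊔ Pattern I₁ I₂, tracePairing ι (symmetrize p) y = 0 :=
    fun y hy => by
      rw [tracePairing_symmetrize p (sup_le (TSpace_le_SymPair hA hB) (Pattern_le _ _) hy),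
        tracePairing_comm, hp y hy, mul_zero]
  have hann : symmetrize p ∈ tangentAnnihilator A B :=
    (mem_tangentAnnihilator_iff hA hB (symmetrize_mem_SymPair p)).2 fun y hy =>
      horth y (Submodule.mem_sup_left hy)
  obtain ⟨h₁, h₂⟩ := apply_eq_zero_of_orthogonal_Pattern (symmetrize_mem_SymPair p)
    (fun y hy => horth y (Submodule.mem_sup_right hy)) hI₁ hI₂
  have hzero := tracePairing_symmetrize p hx
  rw [h.eq_zero _ hann h₁ h₂, map_zero, LinearMap.zero_apply] at hzero
  exact (mul_eq_zero_iff_left two_ne_zero).1 hzero.symm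

end Duality

section ArnoldCriterion

lemma exists_rightInverse_on_range {𝕜 E V : Type*} [NontriviallyNormedField 𝕜] [CompleteSpace 𝕜]
    [NormedAddCommGroup E] [NormedSpace 𝕜 E] [NormedAddCommGroup V] [NormedSpace 𝕜 V]
    [FiniteDimensional 𝕜 V] (f : E →L[𝕜] V) : ∃ s : V →L[𝕜] E, ∀ y ∈ f.range, f (s y) = y := by
  obtain ⟨π, hπ⟩ := f.range.subtype.exists_leftInverse_of_injective f.range.ker_subtype
  obtain ⟨r, hr⟩ :=
    (f : E →ₗ[𝕜] V).rangeRestrict.exists_rightInverse_of_surjective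
      (LinearMap.range_rangeRestrict _)
  refine ⟨(r ∘ₗ π).toContinuousLinearMap, fun y hy => ?_⟩
  have hπy : π y = ⟨y, hy⟩ := LinearMap.congr_fun hπ ⟨y, hy⟩
  have hry := congrArg Subtype.val (LinearMap.congr_fun hr ⟨y, hy⟩)
  simpa [hπy] using hry

/-- If `s` is a right inverse of `f'` on its range, then `v ↦ f (a + s v) + (v - f' (s v))` has
derivative `1` at `0`, and its local inverse yields `g`. -/
theorem exists_analyticAt_rightInverse_on_range {𝕜 E V : Type*} [RCLike 𝕜]
    [NormedAddCommGroup E] [NormedSpace 𝕜 E] [NormedAddCommGroup V] [NormedSpace 𝕜 V]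
    [FiniteDimensional 𝕜 V] {f : E → V} {f' : E →L[𝕜] V} {a : E}
    (hf : AnalyticAt 𝕜 f a) (hf' : HasFDerivAt f f' a) (hmem : ∀ x, f x ∈ f'.range) :
    ∃ g : V → E, AnalyticAt 𝕜 g (f a) ∧ g (f a) = a ∧
      ∀ᶠ y in nhds (f a), y ∈ f'.range → f (g y) = y := by
  have : CompleteSpace V := FiniteDimensional.complete 𝕜 V
  obtain ⟨s, hs⟩ := exists_rightInverse_on_range f'
  let π : V →L[𝕜] V := f' ∘L s
  have hππ : ∀ v, π (π v) = π v := fun v => hs _ ⟨s v, rfl⟩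
  let Ψ : V → V := fun v => f (a + s v) + (v - π v)
  have has : a + s 0 = a := by rw [map_zero, add_zero]
  have hΨa : Ψ 0 = f a := by simp only [Ψ, map_zero, add_zero, sub_zero]
  have hΨ : ContDiffAt 𝕜 ⊤ Ψ 0 :=
    ((AnalyticAt.comp_of_eq hf (analyticAt_const.add (s.analyticAt 0)) has).add
      (analyticAt_id.sub (π.analyticAt 0))).contDiffAt
  have hΨ' : HasFDerivAt Ψ (ContinuousLinearEquiv.refl 𝕜 V : V →L[𝕜] V) 0 :=
    ((HasFDerivAt.comp 0 (has.symm ▸ hf') (s.hasFDerivAt.const_add a)).add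
      ((hasFDerivAt_id 0).sub π.hasFDerivAt)).congr_fderiv (add_sub_cancel _ _)
  have hinv := (hΨ.hasStrictFDerivAt' hΨ' WithTop.top_ne_zero).eventually_right_inverse
  have hanalytic := (hΨ.to_localInverse hΨ' WithTop.top_ne_zero).analyticAt
  have hzero := hΨ.localInverse_apply_image hΨ' WithTop.top_ne_zero
  rw [hΨa] at hinv hanalytic hzero
  refine ⟨fun y => a + s (hΨ.localInverse hΨ' WithTop.top_ne_zero y),
    analyticAt_const.add ((s.analyticAt _).comp hanalytic), by simp only [hzero, has], ?_⟩
  filter_upwards [hinv] with y (hy : f _ + (_ - π _) = y) hyW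
  have hcorrection := congrArg (fun w => w - π w) hy
  simp only [map_add, map_sub, hππ, show π (f _) = f _ from hs _ (hmem _),
    show π y = y from hs y hyW, sub_self, add_zero, add_sub_cancel_left] at hcorrection
  rwa [hcorrection, add_zero] at hy

variable {ι : Type} [Fintype ι]

section Calculus

variable {E : Type*} [NormedAddCommGroup E] [NormedSpace ℂ E] {x : E}

lemma analyticAt_matrix_iff {f : E → Matrix ι ι ℂ} :
    AnalyticAt ℂ f x ↔ ∀ i j, AnalyticAt ℂ (fun p => f p i j) x :=
  (analyticAt_pi_iff (f := fun i p => f p i)).trans <|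
    forall_congr' fun i => analyticAt_pi_iff (f := fun j p => f p i j)

/-- Multiplication of square matrices as a continuous bilinear map. -/
def mulCLM (ι : Type) [Fintype ι] : Matrix ι ι ℂ →L[ℂ] Matrix ι ι ℂ →L[ℂ] Matrix ι ι ℂ :=
  (LinearMap.mul ℂ (Matrix ι ι ℂ)).toContinuousBilinearMap

/-- Transposition of square matrices as a continuous linear map. -/
def transposeCLM (ι : Type) [Fintype ι] : Matrix ι ι ℂ →L[ℂ] Matrix ι ι ℂ :=
  (transposeLinearEquiv ι ι ℂ ℂ).toLinearMap.toContinuousLinearMap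

lemma analyticAt_transpose_mul_mul {f g : E → Matrix ι ι ℂ} (hf : AnalyticAt ℂ f x)
    (hg : AnalyticAt ℂ g x) : AnalyticAt ℂ (fun y => (f y)ᵀ * g y * f y) x :=
  ((mulCLM ι).analyticAt_bilinear _).comp
    ((((mulCLM ι).analyticAt_bilinear _).comp
      ((((transposeCLM ι).analyticAt _).comp hf).prod hg)).prod hf)

lemma hasFDerivAt_transpose_mul_mul [DecidableEq ι] {f g : E → Matrix ι ι ℂ}
    {f' g' h : E →L[ℂ] Matrix ι ι ℂ} (hf : HasFDerivAt f f' x) (hg : HasFDerivAt g g' x)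
    (hfx : f x = 1) (hh : ∀ v, h v = (f' v)ᵀ * g x + g x * f' v + g' v) :
    HasFDerivAt (fun y => (f y)ᵀ * g y * f y) h x := by
  refine ((mulCLM ι).hasFDerivAt_of_bilinear ((mulCLM ι).hasFDerivAt_of_bilinear
    ((transposeCLM ι).hasFDerivAt.comp x hf) hg) hf).congr_fderiv
    (ContinuousLinearMap.ext fun v => ?_)
  change (f x)ᵀ * g x * f' v + ((f x)ᵀ * g' v + (f' v)ᵀ * g x) * f x = h v
  rw [hfx, hh, transpose_one, Matrix.one_mul, Matrix.one_mul, Matrix.mul_one]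
  abel

end Calculus

/-- The congruence action of matrices on pairs of matrices. -/
def congAct (C : Matrix ι ι ℂ) (p : Matrix ι ι ℂ × Matrix ι ι ℂ) : Matrix ι ι ℂ × Matrix ι ι ℂ :=
  (Cᵀ * p.1 * C, Cᵀ * p.2 * C)

lemma congAct_mem_SymPair (C : Matrix ι ι ℂ) {p : Matrix ι ι ℂ × Matrix ι ι ℂ}
    (hp : p ∈ SymPair ι) : congAct C p ∈ SymPair ι := by
  constructor <;>
    simp only [congAct, IsSymm, transpose_mul, transpose_transpose, hp.1.eq, hp.2.eq,
      Matrix.mul_assoc]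

lemma one_congAct [DecidableEq ι] (p : Matrix ι ι ℂ × Matrix ι ι ℂ) : congAct 1 p = p := by
  simp only [congAct, transpose_one, Matrix.one_mul, Matrix.mul_one]

variable {E : Type*} [NormedAddCommGroup E] [NormedSpace ℂ E] {x : E} {A B : Matrix ι ι ℂ}
  {C : E → Matrix ι ι ℂ} {p : E → Matrix ι ι ℂ × Matrix ι ι ℂ}

lemma analyticAt_congAct (hC : AnalyticAt ℂ C x) (hp : AnalyticAt ℂ p x) :
    AnalyticAt ℂ (fun y => congAct (C y) (p y)) x :=
  (analyticAt_transpose_mul_mul hC (analyticAt_fst.comp hp)).prod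
    (analyticAt_transpose_mul_mul hC (analyticAt_snd.comp hp))

lemma hasFDerivAt_congAct [DecidableEq ι] {C' : E →L[ℂ] Matrix ι ι ℂ}
    {p' : E →L[ℂ] Matrix ι ι ℂ × Matrix ι ι ℂ} (hC : HasFDerivAt C C' x)
    (hp : HasFDerivAt p p' x) (hCx : C x = 1) (hpx : p x = (A, B)) :
    HasFDerivAt (fun y => congAct (C y) (p y))
      ((congMap A B).toContinuousLinearMap ∘L C' + p') x := by
  set L := (congMap A B).toContinuousLinearMap ∘L C' + p'
  have h₁ := hasFDerivAt_transpose_mul_mul (h := .fst ℂ _ _ ∘L L) hC hp.fst hCx fun v => by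
    rw [hpx]; rfl
  have h₂ := hasFDerivAt_transpose_mul_mul (h := .snd ℂ _ _ ∘L L) hC hp.snd hCx fun v => by
    rw [hpx]; rfl
  exact h₁.prodMk h₂

lemma Deformation.analyticAt (𝒜 : Deformation ι E A B) : AnalyticAt ℂ 𝒜.map 0 :=
  (analyticAt_matrix_iff.2 𝒜.analytic₁).prod (analyticAt_matrix_iff.2 𝒜.analytic₂)

variable {hA : A.IsSymm} {hB : B.IsSymm} {D : Submodule ℂ (Matrix ι ι ℂ × Matrix ι ι ℂ)}
  {hD : D ≤ SymPair ι}

lemma range_congMap_coprod_subtype :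
    ((congMap A B).toContinuousLinearMap ∘L .fst ℂ _ D + D.subtypeL ∘L .snd ℂ _ D).range =
      TSpace A B ⊔ D :=
  (LinearMap.range_coprod (congMap A B) D.subtype).trans <| by rw [Submodule.range_subtype, TSpace]

theorem isVersal_patternDeformation [DecidableEq ι] (h : TSpace A B ⊔ D = SymPair ι) :
    IsVersal (patternDeformation A B hA hB D hD) := by
  intro Q _ _ _ ℬ
  let f : Matrix ι ι ℂ × D → Matrix ι ι ℂ × Matrix ι ι ℂ := fun x =>
    congAct (1 + x.1) ((A, B) + x.2)
  have hf0 : f 0 = (A, B) := by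
    change congAct (1 + 0) ((A, B) + 0) = _
    rw [add_zero, add_zero, one_congAct]
  have hf : AnalyticAt ℂ f 0 := analyticAt_congAct (analyticAt_const.add analyticAt_fst)
    (analyticAt_const.add ((D.subtypeL.analyticAt _).comp analyticAt_snd))
  have hf' := hasFDerivAt_congAct (A := A) (B := B) (x := (0 : Matrix ι ι ℂ × D))
    (hasFDerivAt_fst.const_add 1) ((D.subtypeL ∘L .snd ℂ _ D).hasFDerivAt.const_add (A, B))
    (add_zero 1) (add_zero (A, B))
  have hrange := (range_congMap_coprod_subtype (A := A) (B := B) (D := D)).trans h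
  have hmem : ∀ x, f x ∈ SymPair ι := fun x =>
    congAct_mem_SymPair _ ((SymPair ι).add_mem ⟨hA, hB⟩ (hD x.2.2))
  obtain ⟨g, hg, hg0, hgf⟩ := exists_analyticAt_rightInverse_on_range hf hf'
    (fun x => hrange ▸ hmem x)
  rw [hf0, ← ℬ.init] at hg hg0 hgf
  have hgℬ := hg.comp ℬ.analyticAt
  refine ⟨fun q => (g (ℬ.map q)).2, analyticAt_snd.comp hgℬ, congrArg Prod.snd hg0,
    fun q => 1 + (g (ℬ.map q)).1,
    analyticAt_matrix_iff.1 (analyticAt_const.add (analyticAt_fst.comp hgℬ)),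
    by simp only [hg0, Prod.fst_zero, add_zero], ?_⟩
  filter_upwards [ℬ.analyticAt.continuousAt.eventually hgf, ℬ.symm] with q hq hsymm
  exact (hq (hrange.symm ▸ hsymm)).symm

theorem finrank_le_of_isVersal [DecidableEq ι] (hA : A.IsSymm) (hB : B.IsSymm)
    (hD : D ≤ SymPair ι) (h : Disjoint (TSpace A B) D) {Q : Type*}
    [NormedAddCommGroup Q] [NormedSpace ℂ Q] [FiniteDimensional ℂ Q] {ℬ : Deformation ι Q A B}
    (hℬ : IsVersal ℬ) : Module.finrank ℂ D ≤ Module.finrank ℂ Q := by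
  obtain ⟨φ, hφ, hφ0, I, hI, hI0, heq⟩ :=
    hℬ D inferInstance inferInstance inferInstance (patternDeformation A B hA hB D hD)
  have hφ' := hφ.differentiableAt.hasFDerivAt
  have hI' := (analyticAt_matrix_iff.2 hI).differentiableAt.hasFDerivAt
  have hℬ' := (hφ0.symm ▸ ℬ.analyticAt.differentiableAt.hasFDerivAt).comp 0 hφ'
  have hderiv := (hasFDerivAt_congAct hI' hℬ' hI0 ((congrArg ℬ.map hφ0).trans ℬ.init)
    ).congr_of_eventuallyEq heq |>.unique (D.subtypeL.hasFDerivAt.const_add (A, B))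
  have hinj : Function.Injective (fderiv ℂ φ 0) := by
    refine (injective_iff_map_eq_zero _).2 fun p hp => ?_
    have hp' : congMap A B (fderiv ℂ I 0 p) + fderiv ℂ ℬ.map (φ 0) (fderiv ℂ φ 0 p) = p :=
      DFunLike.congr_fun hderiv p
    rw [hp, map_zero, add_zero] at hp'
    exact Subtype.ext (Submodule.disjoint_def.1 h _ ⟨_, hp'⟩ p.2)
  exact LinearMap.finrank_le_finrank_of_injective hinj

theorem isMiniversal_patternDeformation [DecidableEq ι] (hdisj : Disjoint (TSpace A B) D)
    (hsup : TSpace A B ⊔ D = SymPair ι) : IsMiniversal (patternDeformation A B hA hB D hD) :=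
  ⟨isVersal_patternDeformation hsup, fun _ _ _ _ _ => finrank_le_of_isVersal hA hB hD hdisj⟩

end ArnoldCriterion

section StripEquations

/-- The matrix with first `s` columns those of `p`, followed by the columns of `q`. -/
def appendCols {α : Type*} (s : ℕ) (p q : Matrix ℕ ℕ α) : Matrix ℕ ℕ α :=
  fun i j => if j < s then p i j else q i (j - s)

lemma appendCols_apply_of_lt {α : Type*} {s : ℕ} {p q : Matrix ℕ ℕ α} {i j : ℕ} (hj : j < s) :
    appendCols s p q i j = p i j := if_pos hj

lemma appendCols_apply_of_le {α : Type*} {s : ℕ} {p q : Matrix ℕ ℕ α} {i j : ℕ} (hj : s ≤ j) :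
    appendCols s p q i j = q i (j - s) := if_neg hj.not_gt

variable {R : Type*} [Zero R]

/-- The pair `y` of `m × n` matrices, extended by zero to `ℕ × ℕ`, has columns related by `P` and
rows related by `Q`. -/
structure IsStripSol (m n : ℕ) (P Q : (ℕ → R) → (ℕ → R) → Prop)
    (y : Matrix ℕ ℕ R × Matrix ℕ ℕ R) : Prop where
  zero_of_le_left : ∀ i j, m ≤ i → y.1 i j = 0 ∧ y.2 i j = 0
  zero_of_le_right : ∀ i j, n ≤ j → y.1 i j = 0 ∧ y.2 i j = 0
  col : ∀ j, P (fun i => y.1 i j) (fun i => y.2 i j)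
  row : ∀ i, Q (y.1 i) (y.2 i)

/-- The solutions of the strip equations are freely parametrized by their entries at the positions
`(I₁, I₂)`. -/
def StripCoordinates (m n : ℕ) (P Q : (ℕ → R) → (ℕ → R) → Prop) (I₁ I₂ : Set (ℕ × ℕ)) : Prop :=
  IsCoordinateSet {y | IsStripSol m n P Q y} Set.univ I₁ I₂

variable {m n s t : ℕ} {P Q Q₁ Q₂ : (ℕ → R) → (ℕ → R) → Prop} {I₁ I₂ J₁ J₂ : Set (ℕ × ℕ)}
  {u : ℕ → R} {y : Matrix ℕ ℕ R × Matrix ℕ ℕ R}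

lemma IsStripSol.transpose (h : IsStripSol m n P Q y) : IsStripSol n m Q P (y.1ᵀ, y.2ᵀ) :=
  ⟨fun i j => h.zero_of_le_right j i, fun i j => h.zero_of_le_left j i, h.row, h.col⟩

lemma IsStripSol.swap (h : IsStripSol m n P Q y) :
    IsStripSol m n (fun u u' => P u' u) (fun u u' => Q u' u) y.swap :=
  ⟨fun i j hi => (h.zero_of_le_left i j hi).symm, fun i j hj => (h.zero_of_le_right i j hj).symm,
    h.col, h.row⟩

lemma StripCoordinates.transpose (h : StripCoordinates m n P Q I₁ I₂) :
    StripCoordinates n m Q P (Prod.swap ⁻¹' I₁) (Prod.swap ⁻¹' I₂) where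
  eq_zero y hy h₁ h₂ := by
    have := h.eq_zero _ hy.transpose (fun i j => h₁ j i) (fun i j => h₂ j i)
    exact Prod.ext (transpose_eq_zero.1 (congrArg Prod.fst this))
      (transpose_eq_zero.1 (congrArg Prod.snd this))
  exists_eq e _ := by
    obtain ⟨y, hy, h₁, h₂⟩ := h.exists_eq (e.1ᵀ, e.2ᵀ) trivial
    exact ⟨(y.1ᵀ, y.2ᵀ), hy.transpose, fun i j => h₁ j i, fun i j => h₂ j i⟩

lemma StripCoordinates.swap (h : StripCoordinates m n P Q I₁ I₂) :
    StripCoordinates m n (fun u u' => P u' u) (fun u u' => Q u' u) I₂ I₁ where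
  eq_zero y hy h₁ h₂ := Prod.swap_injective (h.eq_zero y.swap hy.swap h₂ h₁)
  exists_eq e _ := by
    obtain ⟨y, hy, h₁, h₂⟩ := h.exists_eq e.swap trivial
    exact ⟨y.swap, hy.swap, h₂, h₁⟩

lemma stripCoordinates_empty (hP : P 0 0) (hQ : Q 0 0) (h : ∀ y, IsStripSol m n P Q y → y = 0) :
    StripCoordinates m n P Q ∅ ∅ where
  eq_zero y hy _ _ := h y hy
  exists_eq _ _ := ⟨0, ⟨fun _ _ _ => ⟨rfl, rfl⟩, fun _ _ _ => ⟨rfl, rfl⟩, fun _ => hP, fun _ => hQ⟩,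
    fun _ _ => False.elim, fun _ _ => False.elim⟩

/-- The first `s` entries of `u`, extended by zero. -/
def truncate (s : ℕ) (u : ℕ → R) : ℕ → R := fun i => if i < s then u i else 0

/-- The equations `Q₁` on the first `s` entries together with the equations `Q₂` on the remaining
ones; `Q₁` itself is expected to read only the first `s` entries. -/
def GlueRel (s : ℕ) (Q₁ Q₂ : (ℕ → R) → (ℕ → R) → Prop) (u u' : ℕ → R) : Prop :=
  Q₁ u u' ∧ Q₂ (fun i => u (s + i)) (fun i => u' (s + i))

/-- The positions `I` in the first `s` columns together with the positions `J` in the columns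
counted from `s` on. -/
def glueCols (s : ℕ) (I J : Set (ℕ × ℕ)) : Set (ℕ × ℕ) :=
  {x | (x.2 < s ∧ x ∈ I) ∨ (s ≤ x.2 ∧ (x.1, x.2 - s) ∈ J)}

lemma truncate_eq_self (h : ∀ i, s ≤ i → u i = 0) : truncate s u = u :=
  funext fun i => ite_eq_left_iff.2 fun hi => (h i (not_lt.1 hi)).symm

lemma IsStripSol.truncate_cols (hP : P 0 0)
    (hQ₁ : ∀ u u', Q₁ (truncate s u) (truncate s u') ↔ Q₁ u u')
    (h : IsStripSol m n P (GlueRel s Q₁ Q₂) y) :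
    IsStripSol m s P Q₁ (fun i => truncate s (y.1 i), fun i => truncate s (y.2 i)) where
  zero_of_le_left i j hi := by
    simp [truncate, h.zero_of_le_left i j hi]
  zero_of_le_right i j hj := by simp [truncate, hj.not_gt]
  col j := by
    rcases lt_or_ge j s with hj | hj
    · simpa only [truncate, if_pos hj] using h.col j
    · simpa only [truncate, if_neg hj.not_gt] using! hP
  row i := (hQ₁ _ _).2 (h.row i).1

lemma IsStripSol.shift_cols (h : IsStripSol m (s + t) P (GlueRel s Q₁ Q₂) y) :
    IsStripSol m t P Q₂ (fun i j => y.1 i (s + j), fun i j => y.2 i (s + j)) where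
  zero_of_le_left i j hi := h.zero_of_le_left i _ hi
  zero_of_le_right i j hj := h.zero_of_le_right i _ (by lia)
  col j := h.col (s + j)
  row i := (h.row i).2

lemma truncate_appendCols {p q : Matrix ℕ ℕ R} {i : ℕ} (h : ∀ j, s ≤ j → p i j = 0) :
    truncate s (appendCols s p q i) = p i := by
  rw [← truncate_eq_self h]
  exact funext fun j => ite_congr rfl (fun hj => appendCols_apply_of_lt hj) fun _ => rfl

lemma IsStripSol.append {p q : Matrix ℕ ℕ R × Matrix ℕ ℕ R}
    (hQ₁ : ∀ u u', Q₁ (truncate s u) (truncate s u') ↔ Q₁ u u')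
    (hp : IsStripSol m s P Q₁ p) (hq : IsStripSol m t P Q₂ q) :
    IsStripSol m (s + t) P (GlueRel s Q₁ Q₂) (appendCols s p.1 q.1, appendCols s p.2 q.2) where
  zero_of_le_left i j hi := by
    simp [appendCols, hp.zero_of_le_left i j hi, hq.zero_of_le_left i _ hi]
  zero_of_le_right i j hj := by
    simp [appendCols, show ¬ j < s by lia, hq.zero_of_le_right i (j - s) (by lia)]
  col j := by
    rcases lt_or_ge j s with hj | hj
    · simpa only [appendCols_apply_of_lt hj] using hp.col j
    · simpa only [appendCols_apply_of_le hj] using hq.col (j - s)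
  row i := by
    refine ⟨(hQ₁ _ _).1 ?_, by simpa [appendCols] using hq.row i⟩
    rw [truncate_appendCols fun j hj => (hp.zero_of_le_right i j hj).1,
      truncate_appendCols fun j hj => (hp.zero_of_le_right i j hj).2]
    exact hp.row i

theorem StripCoordinates.glue_right (hst : s + t = n) (hP : P 0 0)
    (hQ₁ : ∀ u u', Q₁ (truncate s u) (truncate s u') ↔ Q₁ u u')
    (h₁ : StripCoordinates m s P Q₁ I₁ I₂) (h₂ : StripCoordinates m t P Q₂ J₁ J₂) :
    StripCoordinates m n P (GlueRel s Q₁ Q₂) (glueCols s I₁ J₁) (glueCols s I₂ J₂) where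
  eq_zero y hy hy₁ hy₂ := by
    have hleft := h₁.eq_zero _ (hy.truncate_cols hP hQ₁)
      (fun i j hij => ite_eq_right_iff.2 fun hj => hy₁ i j (.inl ⟨hj, hij⟩))
      (fun i j hij => ite_eq_right_iff.2 fun hj => hy₂ i j (.inl ⟨hj, hij⟩))
    have hright := h₂.eq_zero _ (IsStripSol.shift_cols (hst ▸ hy))
      (fun i j hij => hy₁ i _ (.inr ⟨s.le_add_right j, by simpa using hij⟩))
      (fun i j hij => hy₂ i _ (.inr ⟨s.le_add_right j, by simpa using hij⟩))
    have hzero {z : Matrix ℕ ℕ R} (hl : (fun i => truncate s (z i)) = (0 : Matrix ℕ ℕ R))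
        (hr : (fun i j => z i (s + j)) = (0 : Matrix ℕ ℕ R)) : z = 0 := by
      ext i j
      rcases lt_or_ge j s with hj | hj
      · simpa [truncate, hj] using congrFun₂ hl i j
      · obtain ⟨j, rfl⟩ := Nat.exists_eq_add_of_le hj
        exact congrFun₂ hr i j
    exact Prod.ext (hzero (congrArg Prod.fst hleft) (congrArg Prod.fst hright))
      (hzero (congrArg Prod.snd hleft) (congrArg Prod.snd hright))
  exists_eq e _ := by
    obtain ⟨p, hp, hp₁, hp₂⟩ := h₁.exists_eq e trivial
    obtain ⟨q, hq, hq₁, hq₂⟩ :=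
      h₂.exists_eq (fun i j => e.1 i (s + j), fun i j => e.2 i (s + j)) trivial
    have happ {I J : Set (ℕ × ℕ)} {p q e : Matrix ℕ ℕ R} (hp : ∀ i j, (i, j) ∈ I → p i j = e i j)
        (hq : ∀ i j, (i, j) ∈ J → q i j = e i (s + j)) (i j : ℕ) (hij : (i, j) ∈ glueCols s I J) :
        appendCols s p q i j = e i j := by
      rcases hij with ⟨hj, hij⟩ | ⟨hj, hij⟩
      · rw [appendCols_apply_of_lt hj, hp i j hij]
      · rw [appendCols_apply_of_le hj, hq _ _ hij, Nat.add_sub_cancel' hj]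
    exact ⟨_, hst ▸ hp.append hQ₁ hq, happ hp₁ hq₁, happ hp₂ hq₂⟩

theorem StripCoordinates.glue_left (hst : s + t = n) (hP : P 0 0)
    (hQ₁ : ∀ u u', Q₁ (truncate s u) (truncate s u') ↔ Q₁ u u')
    (h₁ : StripCoordinates s m Q₁ P I₁ I₂) (h₂ : StripCoordinates t m Q₂ P J₁ J₂) :
    StripCoordinates n m (GlueRel s Q₁ Q₂) P
      (Prod.swap ⁻¹' glueCols s (Prod.swap ⁻¹' I₁) (Prod.swap ⁻¹' J₁))
      (Prod.swap ⁻¹' glueCols s (Prod.swap ⁻¹' I₂) (Prod.swap ⁻¹' J₂)) :=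
  (h₁.transpose.glue_right hst hP hQ₁ h₂.transpose).transpose

end StripEquations

section JordanStrips

variable {R : Type*} [CommRing R]

/-- The equation `Δₖ u + Λₖ(λ) u' = 0` for the columns facing a summand `Hₖ(λ)`, written for the
extensions of `u` and `u'` by zero to `ℕ`. -/
def JordanRel (lam : R) (u u' : ℕ → R) : Prop := ∀ i, u i + lam * u' i + u' (i + 1) = 0

/-- The equation `Λₖ(0) u + Δₖ u' = 0` for the columns facing a summand `Kₖ`. -/
def InfJordanRel (u u' : ℕ → R) : Prop := JordanRel 0 u' u

/-- The equation `Fₖ u + Gₖ u' = 0` for the columns facing the first strip of a summand `Lₖ`. -/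
def UpperRel (k : ℕ) (u u' : ℕ → R) : Prop := ∀ i < k, u i + u' (i + 1) = 0

/-- The equation `Fₖᵀ u + Gₖᵀ u' = 0` for the columns facing the second strip of a summand `Lₖ`. -/
def LowerRel (u u' : ℕ → R) : Prop := u 0 = 0 ∧ ∀ i, u (i + 1) + u' i = 0

lemma InfJordanRel.add_eq_zero {u u' : ℕ → R} (h : InfJordanRel u u') (i : ℕ) :
    u' i + u (i + 1) = 0 := by
  have := h i
  rwa [zero_mul, add_zero] at this

lemma LowerRel.infJordanRel {u u' : ℕ → R} (h : LowerRel u u') : InfJordanRel u u' := fun i => by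
  linear_combination h.2 i

variable {m n k l : ℕ} {u u' : ℕ → R} {y : Matrix ℕ ℕ R × Matrix ℕ ℕ R} {lam mu : R}

lemma upperRel_truncate : UpperRel k (truncate (k + 1) u) (truncate (k + 1) u') ↔ UpperRel k u u' :=
  forall₂_congr fun i hi => by
    rw [truncate, truncate, if_pos (by lia), if_pos (by lia)]

lemma jordanRel_zero : JordanRel lam 0 0 := fun i => by simp

lemma infJordanRel_zero : InfJordanRel (0 : ℕ → R) 0 := jordanRel_zero

lemma upperRel_zero : UpperRel k (0 : ℕ → R) 0 := fun i _ => by simp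

lemma lowerRel_zero : LowerRel (0 : ℕ → R) 0 := ⟨rfl, fun i => by simp⟩

lemma apply_eq_apply_add_zero {α : Type*} {z : Matrix ℕ ℕ α} (h : ∀ i j, z i (j + 1) = z (i + 1) j)
    (i j : ℕ) : z i j = z (i + j) 0 := by
  induction j generalizing i with
  | zero => rfl
  | succ j ih => rw [h, ih, add_right_comm, add_assoc]

lemma exists_apply_eq_of_antidiagonal {α : Type*} {z : Matrix ℕ ℕ α}
    (h : ∀ i < k, ∀ j < l, z i (j + 1) = z (i + 1) j) :
    ∃ f : ℕ → α, ∀ i ≤ k, ∀ j ≤ l, z i j = f (i + j) := by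
  refine ⟨fun s => if s ≤ k then z s 0 else z k (s - k), fun i hi j => ?_⟩
  induction j generalizing i with
  | zero => simp [hi]
  | succ j ih =>
    intro hj
    rcases hi.lt_or_eq with hik | rfl
    · rw [h i hik j hj, ih (i + 1) hik (by lia), add_right_comm, add_assoc]
    · simp

lemma jordan_jordan_hankel (h : IsStripSol m n (JordanRel lam) (JordanRel lam) y) (i j : ℕ) :
    y.2 i j = y.2 (i + j) 0 :=
  apply_eq_apply_add_zero (fun i j => by linear_combination h.row i j - h.col j i) i j

theorem stripCoordinates_jordan_jordan :
    StripCoordinates m n (JordanRel lam) (JordanRel lam) ∅ {x | x.2 = 0 ∧ x.1 < min m n} where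
  eq_zero y hy _ h₂ := by
    have hy₂ : y.2 = 0 := by
      ext i j
      rw [jordan_jordan_hankel hy]
      by_cases hij : i + j < min m n
      · exact h₂ _ _ ⟨rfl, hij⟩
      rcases le_total m n with hmn | hmn
      · exact (hy.zero_of_le_left _ _ (by lia)).2
      · rw [← zero_add (i + j), ← jordan_jordan_hankel hy]
        exact (hy.zero_of_le_right _ _ (by lia)).2
    refine Prod.ext (Matrix.ext fun i j => ?_) hy₂
    have := hy.col j i
    simpa [hy₂] using this
  exists_eq e _ := by
    let f : ℕ → R := fun s => if s < min m n then e.2 s 0 else 0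
    have hf : ∀ s, min m n ≤ s → f s = 0 := fun s hs => if_neg hs.not_gt
    refine ⟨(fun i j => -(lam * f (i + j) + f (i + j + 1)), fun i j => f (i + j)),
      ⟨fun i j hi => ?_, fun i j hj => ?_, fun j i => ?_, fun i j => ?_⟩, fun _ _ => False.elim,
      fun i j hij => ?_⟩
    · simp [hf (i + j) (by lia), hf (i + j + 1) (by lia)]
    · simp [hf (i + j) (by lia), hf (i + j + 1) (by lia)]
    · simp only [add_right_comm i 1 j]
      ring
    · simp only [← add_assoc]
      ring
    · obtain ⟨rfl, hi⟩ := hij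
      exact if_pos hi

theorem stripCoordinates_jordan_jordan_of_ne [IsDomain R] (h : lam ≠ mu) :
    StripCoordinates m n (JordanRel lam) (JordanRel mu) ∅ ∅ := by
  refine stripCoordinates_empty jordanRel_zero jordanRel_zero fun y hy => ?_
  have hzero : ∀ d i j, m + n ≤ i + j + d → y.2 i j = 0 := by
    intro d
    induction d with
    | zero =>
      intro i j hij
      rcases le_or_gt m i with hi | hi
      · exact (hy.zero_of_le_left i j hi).2
      · exact (hy.zero_of_le_right i j (by lia)).2
    | succ d ih =>
      intro i j hij
      have : (lam - mu) * y.2 i j = 0 := by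
        linear_combination hy.col j i - hy.row i j + ih i (j + 1) (by lia) - ih (i + 1) j (by lia)
      exact (mul_eq_zero.1 this).resolve_left (sub_ne_zero.2 h)
  have hy₂ : y.2 = 0 := Matrix.ext fun i j => hzero (m + n) i j (by lia)
  refine Prod.ext (Matrix.ext fun i j => ?_) hy₂
  simpa [hy₂] using hy.col j i

theorem stripCoordinates_jordan [IsDomain R] :
    StripCoordinates m n (JordanRel lam) (JordanRel mu) ∅
      {x | lam = mu ∧ x.2 = 0 ∧ x.1 < min m n} := by
  rcases eq_or_ne lam mu with rfl | h
  · simpa only [true_and] using stripCoordinates_jordan_jordan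
  · simpa only [h, false_and, Set.ofPred_false] using stripCoordinates_jordan_jordan_of_ne h

theorem stripCoordinates_jordan_infJordan :
    StripCoordinates m n (JordanRel lam) InfJordanRel ∅ ∅ := by
  refine stripCoordinates_empty jordanRel_zero infJordanRel_zero fun y hy => ?_
  have hzero : ∀ d i j, n ≤ j + d → y.1 i j = 0 ∧ y.2 i j = 0 := by
    intro d
    induction d with
    | zero => exact fun i j hj => hy.zero_of_le_right i j hj
    | succ d ih =>
      intro i j hj
      have hy₂ : ∀ i, y.2 i j = 0 := fun i => by
        have := (hy.row i).add_eq_zero j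
        rwa [(ih i (j + 1) (by lia)).1, add_zero] at this
      exact ⟨by simpa [hy₂] using hy.col j i, hy₂ i⟩
  exact Prod.ext (Matrix.ext fun i j => (hzero n i j (by lia)).1)
    (Matrix.ext fun i j => (hzero n i j (by lia)).2)

theorem stripCoordinates_jordan_lower :
    StripCoordinates m n (JordanRel lam) LowerRel ∅ ∅ :=
  stripCoordinates_empty jordanRel_zero lowerRel_zero fun y hy =>
    stripCoordinates_jordan_infJordan.eq_zero y { hy with row := fun i => (hy.row i).infJordanRel }
      (fun _ _ => False.elim) fun _ _ => False.elim

theorem stripCoordinates_infJordan_lower :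
    StripCoordinates m n (InfJordanRel (R := R)) LowerRel ∅ ∅ := by
  refine stripCoordinates_empty infJordanRel_zero lowerRel_zero fun y hy => ?_
  have hy₁ : y.1 = 0 := Matrix.ext fun i j => by
    have hankel (i j) : y.1 i (j + 1) = y.1 (i + 1) j := by
      linear_combination (hy.row i).infJordanRel.add_eq_zero j - (hy.col j).add_eq_zero i
    rw [apply_eq_apply_add_zero hankel]
    exact (hy.row (i + j)).1
  refine Prod.ext hy₁ (Matrix.ext fun i j => ?_)
  simpa [hy₁] using (hy.col j).add_eq_zero i

theorem stripCoordinates_lower_lower :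
    StripCoordinates m n (LowerRel (R := R)) LowerRel ∅ ∅ :=
  stripCoordinates_empty lowerRel_zero lowerRel_zero fun y hy =>
    stripCoordinates_infJordan_lower.eq_zero y { hy with col := fun j => (hy.col j).infJordanRel }
      (fun _ _ => False.elim) fun _ _ => False.elim

theorem stripCoordinates_jordan_upper :
    StripCoordinates m (l + 1) (JordanRel lam) (UpperRel l) ∅ {x | x.2 = 0 ∧ x.1 < m} where
  eq_zero y hy _ h₂ := by
    have hcol (j) : ∀ i, y.2 i j = 0 := by
      induction j with
      | zero =>
        exact fun i => (lt_or_ge i m).elim (fun hi => h₂ i 0 ⟨rfl, hi⟩)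
          fun hi => (hy.zero_of_le_left i 0 hi).2
      | succ j ih =>
        intro i
        rcases lt_or_ge j l with hj | hj
        · linear_combination hy.row i j hj - hy.col j i + lam * ih i + ih (i + 1)
        · exact (hy.zero_of_le_right i _ (by lia)).2
    have hy₂ : y.2 = 0 := Matrix.ext fun i j => hcol j i
    refine Prod.ext (Matrix.ext fun i j => ?_) hy₂
    simpa [hy₂] using hy.col j i
  exists_eq e _ := by
    let f : ℕ → ℕ → R := Nat.rec (fun i => if i < m then e.2 i 0 else 0)
      fun _ v i => lam * v i + v (i + 1)
    have hf (j i) (hi : m ≤ i) : f j i = 0 := by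
      induction j generalizing i with
      | zero => exact if_neg hi.not_gt
      | succ j ih => simp [f, ih i hi, ih (i + 1) (by lia)]
    let y' : Matrix ℕ ℕ R := fun i j => if j ≤ l then f j i else 0
    have hy' (i j) (hi : m ≤ i) : y' i j = 0 := by simp [y', hf j i hi]
    refine ⟨(fun i j => -(lam * y' i j + y' (i + 1) j), y'),
      ⟨fun i j hi => ?_, fun i j hj => ?_, fun j i => ?_, fun i j hj => ?_⟩, fun _ _ => False.elim,
      fun i j hij => ?_⟩
    · simp [hy' i j hi, hy' (i + 1) j (by lia)]
    · simp [y', show ¬ j ≤ l by lia]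
    · ring
    · simp [y', f, hj.le, Nat.succ_le_of_lt hj]
    · obtain ⟨rfl, hi⟩ := hij
      simpa [y', f] using fun hi' => absurd hi hi'.not_gt

theorem stripCoordinates_infJordan_upper :
    StripCoordinates m (l + 1) (InfJordanRel (R := R)) (UpperRel l) {x | x.2 = l ∧ x.1 < m} ∅ where
  eq_zero y hy h₁ _ := by
    have hcol (d j) (hj : l ≤ j + d) : ∀ i, y.1 i j = 0 := by
      induction d generalizing j with
      | zero =>
        intro i
        rcases hj.lt_or_eq with hj | rfl
        · exact (hy.zero_of_le_right i j hj).1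
        · exact (lt_or_ge i m).elim (fun hi => h₁ i _ ⟨rfl, hi⟩)
            fun hi => (hy.zero_of_le_left i _ hi).1
      | succ d ih =>
        intro i
        rcases lt_or_ge j l with hjl | hjl
        · linear_combination hy.row i j hjl - (hy.col (j + 1)).add_eq_zero i
            + ih (j + 1) (by lia) (i + 1)
        · exact ih j (by lia) i
    have hy₁ : y.1 = 0 := Matrix.ext fun i j => hcol l j (by lia) i
    refine Prod.ext hy₁ (Matrix.ext fun i j => ?_)
    simpa [hy₁] using (hy.col j).add_eq_zero i
  exists_eq e _ := by
    let z : Matrix ℕ ℕ R := fun i j => if j ≤ l ∧ i + (l - j) < m then e.1 (i + (l - j)) l else 0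
    have hz (i j) (h : m ≤ i ∨ l < j) : z i j = 0 := if_neg (by lia)
    refine ⟨(z, fun i j => -z (i + 1) j),
      ⟨fun i j hi => ?_, fun i j hj => ?_, fun j i => ?_, fun i j hj => ?_⟩, fun i j hij => ?_,
      fun _ _ => False.elim⟩
    · simp [hz i j (.inl hi), hz (i + 1) j (.inl (by lia))]
    · simp [hz i j (.inr hj), hz (i + 1) j (.inr hj)]
    · ring
    · have : i + (l - j) = i + 1 + (l - (j + 1)) := by lia
      simp [z, this, hj.le, Nat.succ_le_of_lt hj]
    · obtain ⟨rfl, hi⟩ := hij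
      simp [z, hi]

end JordanStrips

section KroneckerStrips

variable {R : Type*} [CommRing R] {m n k l : ℕ} {y : Matrix ℕ ℕ R × Matrix ℕ ℕ R}

lemma exists_upper_upper_hankel (h : IsStripSol m n (UpperRel k) (UpperRel l) y) :
    ∃ f : ℕ → R, ∀ i ≤ k, ∀ j ≤ l, y.2 i j = f (i + j) :=
  exists_apply_eq_of_antidiagonal fun i hi j hj => by
    linear_combination h.row i j hj - h.col j i hi

lemma upper_upper_snd_eq_zero (h : IsStripSol (k + 1) (l + 1) (UpperRel k) (UpperRel l) y)
    (hfirst : ∀ j ≤ l, y.2 0 j = 0) (hlast : ∀ i ≤ k, y.2 i l = 0) : y.2 = 0 := by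
  obtain ⟨f, hf⟩ := exists_upper_upper_hankel h
  have hf_zero (s) (hs : s ≤ k + l) : f s = 0 := by
    rcases le_total s l with hsl | hsl
    · rw [← zero_add s, ← hf 0 (by lia) s hsl, hfirst s hsl]
    · rw [← Nat.sub_add_cancel hsl, ← hf (s - l) (by lia) l le_rfl, hlast _ (by lia)]
  ext i j
  by_cases hij : i ≤ k ∧ j ≤ l
  · rw [hf i hij.1 j hij.2, hf_zero _ (by lia), Matrix.zero_apply]
  · rcases not_and_or.1 hij with hi | hj
    · exact (h.zero_of_le_left i j (by lia)).2
    · exact (h.zero_of_le_right i j (by lia)).2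

theorem stripCoordinates_upper_upper :
    StripCoordinates (k + 1) (l + 1) (UpperRel (R := R) k) (UpperRel l) {x | x.1 = k ∧ x.2 = l}
      {x | (x.1 = 0 ∧ x.2 ≤ l) ∨ (x.2 = l ∧ x.1 ≤ k)} where
  eq_zero y hy h₁ h₂ := by
    have hy₂ := upper_upper_snd_eq_zero hy (fun j hj => h₂ _ _ (.inl ⟨rfl, hj⟩))
      fun i hi => h₂ _ _ (.inr ⟨rfl, hi⟩)
    refine Prod.ext (Matrix.ext fun i j => ?_) hy₂
    rcases lt_trichotomy i k with hi | rfl | hi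
    · simpa [hy₂] using hy.col j i hi
    · rcases lt_trichotomy j l with hj | rfl | hj
      · simpa [hy₂] using hy.row i j hj
      · exact h₁ _ _ ⟨rfl, rfl⟩
      · exact (hy.zero_of_le_right i j hj).1
    · exact (hy.zero_of_le_left i j hi).1
  exists_eq e _ := by
    let f : ℕ → R := fun s => if s ≤ l then e.2 0 s else e.2 (s - l) l
    refine ⟨(fun i j => if i ≤ k ∧ j ≤ l then
          if i = k ∧ j = l then e.1 k l else -f (i + j + 1) else 0,
        fun i j => if i ≤ k ∧ j ≤ l then f (i + j) else 0),
      ⟨fun i j hi => ?_, fun i j hj => ?_, fun j i hi => ?_, fun i j hj => ?_⟩, fun i j hij => ?_,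
      fun i j hij => ?_⟩
    · simp [show ¬ i ≤ k by lia]
    · simp [show ¬ j ≤ l by lia]
    · simp [hi.le, hi.ne, Nat.succ_le_of_lt hi, add_right_comm i 1 j, ite_add_ite]
    · simp [hj.le, hj.ne, Nat.succ_le_of_lt hj, ← add_assoc, ite_add_ite]
    · obtain ⟨rfl, rfl⟩ := hij
      simp
    · rcases hij with ⟨rfl, hj⟩ | ⟨rfl, hi⟩
      · simp_all [f]
      · simp +contextual [show i ≤ k from hi, f]

lemma upper_lower_diagonal (h : IsStripSol m n (UpperRel k) LowerRel y) {i d : ℕ} (hd : i + d ≤ k)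
    (j : ℕ) : y.2 i j = y.2 (i + d) (j + d) := by
  induction d with
  | zero => rfl
  | succ d ih =>
    rw [ih (by lia)]
    linear_combination (h.row (i + d)).2 (j + d) - h.col (j + d + 1) (i + d) (by lia)

lemma upper_lower_last_row_eq_zero (h : IsStripSol m l (UpperRel k) LowerRel y)
    (hfree : ∀ j, k ≤ j → j + 2 ≤ l → y.2 k j = 0) (j : ℕ) : y.2 k j = 0 := by
  rcases lt_or_ge j k with hj | hj
  · obtain ⟨d, rfl⟩ := Nat.exists_eq_add_of_lt hj
    have hdiag := upper_lower_diagonal h (i := d + 1) (d := j) (by lia) 0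
    have hrow := (h.row d).1
    have hcol := h.col 0 d (by lia)
    rw [show j + d + 1 = d + 1 + j by lia]
    rw [zero_add] at hdiag
    linear_combination hcol - hrow - hdiag
  · by_cases hjl : j + 2 ≤ l
    · exact hfree j hj hjl
    · linear_combination (h.row k).2 j - (h.zero_of_le_right k (j + 1) (by lia)).1

theorem stripCoordinates_upper_lower :
    StripCoordinates (k + 1) l (UpperRel (R := R) k) LowerRel ∅
      {x | x.1 = k ∧ k ≤ x.2 ∧ x.2 + 2 ≤ l} where
  eq_zero y hy _ h₂ := by
    have hlast := upper_lower_last_row_eq_zero hy fun j hj hjl => h₂ _ _ ⟨rfl, hj, hjl⟩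
    have hy₂ (i j) : y.2 i j = 0 := by
      rcases le_or_gt i k with hi | hi
      · rw [upper_lower_diagonal hy (d := k - i) (by lia), Nat.add_sub_cancel' hi, hlast]
      · exact (hy.zero_of_le_left i j hi).2
    refine Prod.ext (Matrix.ext fun i j => ?_) (Matrix.ext hy₂)
    cases j with
    | zero => exact (hy.row i).1
    | succ j => simpa [hy₂] using (hy.row i).2 j
  exists_eq e _ := by
    let z : Matrix ℕ ℕ R := fun i j =>
      if i ≤ k ∧ i ≤ j ∧ j + k + 2 ≤ l + i then e.2 k (k + (j - i)) else 0
    have hz (i j) (h : k < i ∨ l ≤ j + 1) : z i j = 0 := if_neg (by lia)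
    refine ⟨(fun i j => Nat.casesOn j 0 fun j => -z i j, z),
      ⟨fun i j hi => ?_, fun i j hj => ?_, fun j i hi => ?_, fun i => ⟨rfl, fun j => ?_⟩⟩,
      fun _ _ => False.elim, fun i j hij => ?_⟩
    · cases j <;> simp [hz i _ (.inl hi)]
    · refine ⟨?_, hz i j (.inr (by lia))⟩
      cases j with
      | zero => rfl
      | succ j => exact neg_eq_zero.2 (hz i j (.inr hj))
    · cases j with
      | zero => simp [z]
      | succ j =>
        have : z (i + 1) (j + 1) = z i j :=
          if_congr (by lia) (by rw [Nat.add_sub_add_right]) rfl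
        simp [this]
    · simp
    · obtain ⟨rfl, hj, hjl⟩ := hij
      simp [z, show i ≤ j from hj, show j + i + 2 ≤ l + i by lia]

end KroneckerStrips

section CanonicalPairs

/-- The equation `A u + B u' = 0` for the canonical pair `(A, B)`, written for the extensions of `u`
and `u'` by zero to `ℕ`. -/
def CanType.Rel : CanType → (ℕ → ℂ) → (ℕ → ℂ) → Prop
  | .H _ lam => JordanRel lam
  | .K _ => InfJordanRel
  | .L k => GlueRel (k + 1) (UpperRel k) LowerRel

lemma CanType.Rel.sub {c : CanType} {u u' v v' : ℕ → ℂ} (h : c.Rel u u') (h' : c.Rel v v') :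
    c.Rel (u - v) (u' - v') := by
  have hJordan {lam : ℂ} {u u' v v' : ℕ → ℂ} (h : JordanRel lam u u') (h' : JordanRel lam v v') :
      JordanRel lam (u - v) (u' - v') := fun i => by
    simp only [Pi.sub_apply]
    linear_combination h i - h' i
  cases c with
  | H k lam => exact hJordan h h'
  | K k => exact hJordan h h'
  | L k =>
    refine ⟨fun i hi => ?_, sub_eq_zero.2 (h.2.1.trans h'.2.1.symm), fun i => ?_⟩
    · simp only [Pi.sub_apply]
      linear_combination h.1 i hi - h'.1 i hi
    · simp only [Pi.sub_apply]
      linear_combination h.2.2 i - h'.2.2 i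

lemma stripCoordinates_jordan_kronecker (m l : ℕ) (lam : ℂ) :
    StripCoordinates m (2 * l + 1) (JordanRel lam) (CanType.L l).Rel ∅
      {x | x.2 = 0 ∧ x.1 < m} := by
  refine (stripCoordinates_jordan_upper.glue_right (show l + 1 + l = 2 * l + 1 by lia)
    jordanRel_zero (fun _ _ => upperRel_truncate) stripCoordinates_jordan_lower).congr ?_ ?_ <;>
  simp only [glueCols, Set.mem_ofPred_eq, Set.mem_empty_iff_false] <;> lia

lemma stripCoordinates_infJordan_kronecker (m l : ℕ) :
    StripCoordinates m (2 * l + 1) InfJordanRel (CanType.L l).Rel {x | x.2 = l ∧ x.1 < m} ∅ := by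
  refine (stripCoordinates_infJordan_upper.glue_right (show l + 1 + l = 2 * l + 1 by lia)
    infJordanRel_zero (fun _ _ => upperRel_truncate)
    stripCoordinates_infJordan_lower).congr ?_ ?_ <;>
  simp only [glueCols, Set.mem_ofPred_eq, Set.mem_empty_iff_false] <;> lia

lemma stripCoordinates_kronecker_kronecker (k l : ℕ) :
    StripCoordinates (2 * k + 1) (2 * l + 1) (CanType.L k).Rel (CanType.L l).Rel
      {x | x.1 = k ∧ x.2 = l}
      {x | (x.1 = 0 ∧ x.2 ≤ l) ∨ (x.2 = l ∧ x.1 ≤ k) ∨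
        (x.1 = k ∧ k + l + 2 ≤ x.2 + 1 ∧ x.2 + 1 ≤ 2 * l) ∨
        (x.2 = l ∧ k + l + 2 ≤ x.1 + 1 ∧ x.1 + 1 ≤ 2 * k)} := by
  have hl : l + 1 + l = 2 * l + 1 := by lia
  have hupper := stripCoordinates_upper_upper.glue_right hl upperRel_zero
    (fun _ _ => upperRel_truncate) (stripCoordinates_upper_lower (R := ℂ) (k := k))
  have hlower := stripCoordinates_upper_lower.transpose.glue_right hl lowerRel_zero
    (fun _ _ => upperRel_truncate) (stripCoordinates_lower_lower (R := ℂ) (m := k))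
  refine (hupper.glue_left (by lia) ⟨upperRel_zero, lowerRel_zero⟩
    (fun _ _ => upperRel_truncate) hlower).congr ?_ ?_ <;>
  simp only [glueCols, Set.mem_ofPred_eq, Set.mem_empty_iff_false, Set.mem_preimage,
    Prod.swap_prod_mk] <;> lia

theorem stripCoordinates_offSupp (c d : CanType) :
    StripCoordinates c.size d.size c.Rel d.Rel
      {x | x.1 < c.size ∧ x.2 < d.size ∧ offSupp1 c d x.1 x.2}
      {x | x.1 < c.size ∧ x.2 < d.size ∧ offSupp2 c d x.1 x.2} := by
  rcases c with ⟨k, lam⟩ | k | k <;> rcases d with ⟨l, mu⟩ | l | l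
  case' H.H => refine stripCoordinates_jordan.congr ?_ ?_
  case' H.K => refine stripCoordinates_jordan_infJordan.congr ?_ ?_
  case' H.L => refine (stripCoordinates_jordan_kronecker k l lam).congr ?_ ?_
  case' K.H => refine stripCoordinates_jordan_infJordan.transpose.congr ?_ ?_
  case' K.K => refine stripCoordinates_jordan_jordan.swap.congr ?_ ?_
  case' K.L => refine (stripCoordinates_infJordan_kronecker k l).congr ?_ ?_
  case' L.H => refine (stripCoordinates_jordan_kronecker l k mu).transpose.congr ?_ ?_
  case' L.K => refine (stripCoordinates_infJordan_kronecker l k).transpose.congr ?_ ?_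
  case' L.L => refine (stripCoordinates_kronecker_kronecker k l).congr ?_ ?_
  all_goals
    simp only [CanType.size, offSupp1, offSupp2, Set.mem_ofPred_eq, Set.mem_empty_iff_false,
      Set.mem_preimage, Prod.swap_prod_mk]
    grind

end CanonicalPairs

section DiagonalBlocks

variable {α : Type*} {Z : Set (Matrix ℕ ℕ α)} {I J I₁ I₂ J₁ J₂ : Set (ℕ × ℕ)}

/-- The symmetric set `J` of positions next to the diagonal arises from `I` by moving positions
along antidiagonals in a way that does not change the entries of the matrices in `Z`. -/
structure IsAntidiagonalMove (Z : Set (Matrix ℕ ℕ α)) (I J : Set (ℕ × ℕ)) : Prop where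
  exists_mem_right : ∀ x ∈ I, ∃ x' ∈ J, x.1 + x.2 = x'.1 + x'.2
  exists_mem_left : ∀ x' ∈ J, ∃ x ∈ I, x.1 + x.2 = x'.1 + x'.2
  swap_mem : ∀ x ∈ J, x.swap ∈ J
  near_diagonal : ∀ x ∈ J, x.1 ≤ x.2 + 1 ∧ x.2 ≤ x.1 + 1
  apply_eq : ∀ z ∈ Z, ∀ x ∈ I, ∀ x' ∈ J, x.1 + x.2 = x'.1 + x'.2 → z x.1 x.2 = z x'.1 x'.2

/-- The matrix constant along antidiagonals that agrees with the symmetric matrix `e` next to the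
diagonal. -/
def hankelize (e : Matrix ℕ ℕ α) : Matrix ℕ ℕ α := fun i j => e ((i + j) / 2) ((i + j + 1) / 2)

lemma hankelize_apply_of_near_diagonal {e : Matrix ℕ ℕ α} (he : e.IsSymm) {i j : ℕ}
    (hij : i ≤ j + 1 ∧ j ≤ i + 1) : hankelize e i j = e i j := by
  rw [hankelize]
  rcases le_or_gt i j with h | h
  · rw [show (i + j) / 2 = i by lia, show (i + j + 1) / 2 = j by lia]
  · rw [show (i + j) / 2 = j by lia, show (i + j + 1) / 2 = i by lia, he.apply]

lemma IsAntidiagonalMove.eq_zero_of_mem_left [Zero α] (h : IsAntidiagonalMove Z I J)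
    {z : Matrix ℕ ℕ α} (hz : z ∈ Z) (hJ : ∀ i j, (i, j) ∈ J → z i j = 0) (i j : ℕ)
    (hij : (i, j) ∈ I) : z i j = 0 := by
  obtain ⟨x', hx', hsum⟩ := h.exists_mem_right _ hij
  exact (h.apply_eq z hz _ hij x' hx' hsum).trans (hJ _ _ hx')

lemma IsAntidiagonalMove.eq_of_eq_hankelize (h : IsAntidiagonalMove Z I J) {z e : Matrix ℕ ℕ α}
    (hz : z ∈ Z) (he : e.IsSymm) (hI : ∀ i j, (i, j) ∈ I → z i j = hankelize e i j) (i j : ℕ)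
    (hij : (i, j) ∈ J) : z i j = e i j := by
  obtain ⟨x, hx, hsum⟩ := h.exists_mem_left _ hij
  rw [← h.apply_eq z hz x hx _ hij hsum, hI _ _ hx,
    ← hankelize_apply_of_near_diagonal he (h.near_diagonal _ hij), hankelize, hankelize, hsum]

lemma isAntidiagonalMove_empty : IsAntidiagonalMove Z ∅ ∅ := by
  constructor <;> simp

lemma isAntidiagonalMove_singleton (i : ℕ) : IsAntidiagonalMove Z {(i, i)} {(i, i)} := by
  constructor <;> simp

lemma isAntidiagonalMove_column (hZ : ∀ z ∈ Z, ∀ i j, z i j = z (i + j) 0) (k : ℕ) :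
    IsAntidiagonalMove Z {x | x.2 = 0 ∧ x.1 < k}
      {x | (x.1 ≤ x.2 + 1 ∧ x.2 ≤ x.1 + 1) ∧ x.1 + x.2 < k} where
  exists_mem_right x hx :=
    ⟨(x.1 / 2, (x.1 + 1) / 2), ⟨by lia, by have := hx.2; lia⟩, by have := hx.1; lia⟩
  exists_mem_left x' hx' := ⟨(x'.1 + x'.2, 0), ⟨rfl, hx'.2⟩, rfl⟩
  swap_mem _ hx := ⟨hx.1.symm, (add_comm _ _).trans_lt hx.2⟩
  near_diagonal _ hx := hx.1
  apply_eq z hz x _ x' _ hsum := by rw [hZ z hz, hZ z hz x'.1, hsum]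

lemma isAntidiagonalMove_hook {k : ℕ}
    (hZ : ∀ z ∈ Z, ∃ f : ℕ → α, ∀ i ≤ k, ∀ j ≤ k, z i j = f (i + j)) :
    IsAntidiagonalMove Z {x | (x.1 = 0 ∧ x.2 ≤ k) ∨ (x.2 = k ∧ x.1 ≤ k)}
      {x | x.1 ≤ k ∧ x.2 ≤ k ∧ x.1 ≤ x.2 + 1 ∧ x.2 ≤ x.1 + 1} where
  exists_mem_right x hx := by
    have hx : x.1 ≤ k ∧ x.2 ≤ k := by rcases hx with hx | hx <;> lia
    exact ⟨((x.1 + x.2) / 2, (x.1 + x.2 + 1) / 2), ⟨by lia, by lia, by lia, by lia⟩, by lia⟩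
  exists_mem_left x' hx' := by
    obtain ⟨h₁, h₂, -⟩ := hx'
    rcases le_total (x'.1 + x'.2) k with h | h
    · exact ⟨(0, x'.1 + x'.2), .inl ⟨rfl, h⟩, by lia⟩
    · exact ⟨(x'.1 + x'.2 - k, k), .inr ⟨rfl, by lia⟩, by lia⟩
  swap_mem _ hx := ⟨hx.2.1, hx.1, hx.2.2.symm⟩
  near_diagonal _ hx := hx.2.2
  apply_eq z hz x hx x' hx' hsum := by
    obtain ⟨f, hf⟩ := hZ z hz
    have hx : x.1 ≤ k ∧ x.2 ≤ k := by rcases hx with hx | hx <;> lia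
    rw [hf _ hx.1 _ hx.2, hf _ hx'.1 _ hx'.2.1, hsum]

variable {R : Type*} [AddGroup R] {m n : ℕ} {P Q : (ℕ → R) → (ℕ → R) → Prop}

lemma IsStripSol.sub {y y' : Matrix ℕ ℕ R × Matrix ℕ ℕ R}
    (hP : ∀ u u' v v', P u u' → P v v' → P (u - v) (u' - v'))
    (hQ : ∀ u u' v v', Q u u' → Q v v' → Q (u - v) (u' - v'))
    (h : IsStripSol m n P Q y) (h' : IsStripSol m n P Q y') : IsStripSol m n P Q (y - y') where
  zero_of_le_left i j hi := by simp [h.zero_of_le_left i j hi, h'.zero_of_le_left i j hi]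
  zero_of_le_right i j hj := by simp [h.zero_of_le_right i j hj, h'.zero_of_le_right i j hj]
  col j := hP _ _ _ _ (h.col j) (h'.col j)
  row i := hQ _ _ _ _ (h.row i) (h'.row i)

theorem StripCoordinates.of_antidiagonalMove (h : StripCoordinates n n P P I₁ I₂)
    (hP : ∀ u u' v v', P u u' → P v v' → P (u - v) (u' - v'))
    (h₁ : IsAntidiagonalMove (Prod.fst '' {y | IsStripSol n n P P y}) I₁ J₁)
    (h₂ : IsAntidiagonalMove (Prod.snd '' {y | IsStripSol n n P P y}) I₂ J₂) :
    IsCoordinateSet {y | IsStripSol n n P P y ∧ y.1.IsSymm ∧ y.2.IsSymm}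
      {e | e.1.IsSymm ∧ e.2.IsSymm} J₁ J₂ := by
  have hzero {y} (hy : IsStripSol n n P P y) (hy₁ : ∀ i j, (i, j) ∈ J₁ → y.1 i j = 0)
      (hy₂ : ∀ i j, (i, j) ∈ J₂ → y.2 i j = 0) : y = 0 :=
    h.eq_zero y hy (h₁.eq_zero_of_mem_left ⟨y, hy, rfl⟩ hy₁)
      (h₂.eq_zero_of_mem_left ⟨y, hy, rfl⟩ hy₂)
  refine ⟨fun y hy => hzero hy.1, fun e he => ?_⟩
  obtain ⟨y, hy, hyI₁, hyI₂⟩ := h.exists_eq (hankelize e.1, hankelize e.2) trivial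
  have hy₁ := h₁.eq_of_eq_hankelize ⟨y, hy, rfl⟩ he.1 hyI₁
  have hy₂ := h₂.eq_of_eq_hankelize ⟨y, hy, rfl⟩ he.2 hyI₂
  have hsymm : y - (y.1ᵀ, y.2ᵀ) = 0 :=
    hzero (hy.sub hP hP hy.transpose)
      (fun i j hij => by
        simp [hy₁ i j hij, hy₁ j i (h₁.swap_mem _ hij), he.1.apply i j])
      fun i j hij => by
        simp [hy₂ i j hij, hy₂ j i (h₂.swap_mem _ hij), he.2.apply i j]
  have hsymm := sub_eq_zero.1 hsymm
  exact ⟨y, ⟨hy, (congrArg Prod.fst hsymm).symm, (congrArg Prod.snd hsymm).symm⟩, hy₁, hy₂⟩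

/-- The solutions of the strip equations of a diagonal block that are pairs of symmetric
matrices. -/
def CanType.symmStripSols (c : CanType) : Set (Matrix ℕ ℕ ℂ × Matrix ℕ ℕ ℂ) :=
  {y | IsStripSol c.size c.size c.Rel c.Rel y ∧ y.1.IsSymm ∧ y.2.IsSymm}

lemma isCoordinateSet_symmStripSols_H (k : ℕ) (lam : ℂ) :
    IsCoordinateSet (CanType.H k lam).symmStripSols {e | e.1.IsSymm ∧ e.2.IsSymm}
      ∅ {x | (x.1 ≤ x.2 + 1 ∧ x.2 ≤ x.1 + 1) ∧ x.1 + x.2 < k} := by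
  have hankel : ∀ z ∈ Prod.snd '' {y | IsStripSol k k (JordanRel lam) (JordanRel lam) y},
      ∀ i j, z i j = z (i + j) 0 := by
    rintro _ ⟨y, hy, rfl⟩
    exact jordan_jordan_hankel hy
  have hcoord : StripCoordinates k k (JordanRel lam) (JordanRel lam) ∅ {x | x.2 = 0 ∧ x.1 < k} := by
    simpa only [min_self] using stripCoordinates_jordan_jordan (m := k) (n := k)
  exact hcoord.of_antidiagonalMove (fun _ _ _ _ => CanType.Rel.sub (c := .H k lam))
    isAntidiagonalMove_empty (isAntidiagonalMove_column hankel k)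

lemma isCoordinateSet_symmStripSols_K (k : ℕ) :
    IsCoordinateSet (CanType.K k).symmStripSols {e | e.1.IsSymm ∧ e.2.IsSymm}
      {x | (x.1 ≤ x.2 + 1 ∧ x.2 ≤ x.1 + 1) ∧ x.1 + x.2 < k} ∅ := by
  have h := isCoordinateSet_symmStripSols_H k 0
  refine ⟨fun y hy h₁ h₂ => ?_, fun e he => ?_⟩
  · exact Prod.swap_injective (h.eq_zero y.swap ⟨hy.1.swap, hy.2.symm⟩ h₂ h₁)
  · obtain ⟨y, hy, h₁, h₂⟩ := h.exists_eq e.swap he.symm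
    exact ⟨y.swap, ⟨hy.1.swap, hy.2.symm⟩, h₂, h₁⟩

lemma isCoordinateSet_symmStripSols_L (k : ℕ) :
    IsCoordinateSet (CanType.L k).symmStripSols {e | e.1.IsSymm ∧ e.2.IsSymm}
      {(k, k)} {x | x.1 ≤ k ∧ x.2 ≤ k ∧ x.1 ≤ x.2 + 1 ∧ x.2 ≤ x.1 + 1} := by
  have hankel : ∀ z ∈ Prod.snd '' {y | IsStripSol (2 * k + 1) (2 * k + 1) (CanType.L k).Rel
      (CanType.L k).Rel y}, ∃ f : ℕ → ℂ, ∀ i ≤ k, ∀ j ≤ k, z i j = f (i + j) := by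
    rintro _ ⟨y, hy, rfl⟩
    exact exists_upper_upper_hankel
      { hy with col := fun j => (hy.col j).1, row := fun i => (hy.row i).1 }
  have hcoord : StripCoordinates (2 * k + 1) (2 * k + 1) (CanType.L k).Rel (CanType.L k).Rel
      {(k, k)} {x | (x.1 = 0 ∧ x.2 ≤ k) ∨ (x.2 = k ∧ x.1 ≤ k)} := by
    refine (stripCoordinates_kronecker_kronecker k k).congr ?_ ?_ <;>
    simp only [Set.mem_ofPred_eq, Set.mem_singleton_iff, Prod.mk.injEq] <;> lia
  exact hcoord.of_antidiagonalMove (fun _ _ _ _ => CanType.Rel.sub)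
    (isAntidiagonalMove_singleton k) (isAntidiagonalMove_hook hankel)

theorem isCoordinateSet_diagSupp (c : CanType) :
    IsCoordinateSet c.symmStripSols {e | e.1.IsSymm ∧ e.2.IsSymm}
      {x | x.1 < c.size ∧ x.2 < c.size ∧ diagSupp1 c x.1 x.2}
      {x | x.1 < c.size ∧ x.2 < c.size ∧ diagSupp2 c x.1 x.2} := by
  cases c with
  | H k lam =>
    refine (isCoordinateSet_symmStripSols_H k lam).congr ?_ ?_ <;>
    simp only [CanType.size, diagSupp1, diagSupp2, Set.mem_ofPred_eq, Set.mem_empty_iff_false] <;>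
    lia
  | K k =>
    refine (isCoordinateSet_symmStripSols_K k).congr ?_ ?_ <;>
    simp only [CanType.size, diagSupp1, diagSupp2, Set.mem_ofPred_eq, Set.mem_empty_iff_false] <;>
    lia
  | L k =>
    refine (isCoordinateSet_symmStripSols_L k).congr ?_ ?_ <;>
    simp only [CanType.size, diagSupp1, diagSupp2, Set.mem_ofPred_eq, Set.mem_singleton_iff,
      Prod.mk.injEq] <;>
    lia

end DiagonalBlocks

section ZeroExtension

variable {R : Type*} {n : ℕ}

/-- The extension by zero of a vector to a sequence. -/
def zeroExtend [Zero R] (v : Fin n → R) (i : ℕ) : R := if h : i < n then v ⟨i, h⟩ else 0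

lemma zeroExtend_of_lt [Zero R] (v : Fin n → R) {i : ℕ} (hi : i < n) : zeroExtend v i = v ⟨i, hi⟩ :=
  dif_pos hi

lemma zeroExtend_of_le [Zero R] (v : Fin n → R) {i : ℕ} (hi : n ≤ i) : zeroExtend v i = 0 :=
  dif_neg hi.not_gt

lemma zeroExtend_zero [Zero R] : zeroExtend (0 : Fin n → R) = 0 := by
  ext i
  simp only [zeroExtend, Pi.zero_apply, dite_eq_ite, ite_self]

lemma mulVec_apply_of_row_eq_ite [Semiring R] {m : Type*} {M : Matrix m (Fin n) R} {i : m} {a : ℕ}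
    (h : ∀ j : Fin n, M i j = if (j : ℕ) = a then 1 else 0) (v : Fin n → R) :
    (M *ᵥ v) i = zeroExtend v a := by
  rw [mulVec, dotProduct]
  by_cases ha : a < n
  · rw [Finset.sum_eq_single_of_mem ⟨a, ha⟩ (Finset.mem_univ _), h, if_pos rfl, one_mul,
      zeroExtend_of_lt v ha]
    intro j _ hj
    rw [h, if_neg fun hja => hj (Fin.ext hja), zero_mul]
  · rw [zeroExtend_of_le v (not_lt.1 ha)]
    exact Finset.sum_eq_zero fun j _ => by rw [h, if_neg (by lia), zero_mul]

end ZeroExtension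

section CanonicalEquations

variable {n : ℕ}

lemma delM_mulVec (v : Fin n → ℂ) (i : Fin n) : (delM n *ᵥ v) i.rev = zeroExtend v i :=
  mulVec_apply_of_row_eq_ite (fun j => by rw [delM, of_apply]; grind) v

lemma lamM_zero_mulVec (v : Fin n → ℂ) (i : Fin n) :
    (lamM n 0 *ᵥ v) i.rev = zeroExtend v (i + 1) :=
  mulVec_apply_of_row_eq_ite (fun j => by rw [lamM, of_apply]; grind) v

lemma lamM_eq_smul_delM_add (lam : ℂ) : lamM n lam = lam • delM n + lamM n 0 := by
  ext i j
  simp only [lamM, delM, of_apply, Matrix.add_apply, Matrix.smul_apply, smul_eq_mul]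
  split_ifs <;> ring

lemma delM_mulVec_add_lamM_mulVec_eq_zero_iff (lam : ℂ) (v v' : Fin n → ℂ) :
    delM n *ᵥ v + lamM n lam *ᵥ v' = 0 ↔ JordanRel lam (zeroExtend v) (zeroExtend v') := by
  rw [funext_iff, ← Fin.revPerm.forall_congr_right]
  simp only [lamM_eq_smul_delM_add lam, add_mulVec, smul_mulVec, Fin.revPerm_apply, Pi.add_apply,
    Pi.smul_apply, smul_eq_mul, delM_mulVec, lamM_zero_mulVec, Pi.zero_apply, ← add_assoc]
  refine ⟨fun h i => ?_, fun h i => h i⟩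
  by_cases hi : i < n
  · exact h ⟨i, hi⟩
  · rw [zeroExtend_of_le v (by lia), zeroExtend_of_le v' (by lia), zeroExtend_of_le v' (by lia)]
    ring

lemma FM_mulVec (v : Fin (n + 1) → ℂ) (i : Fin n) : (FM n *ᵥ v) i = zeroExtend v i :=
  mulVec_apply_of_row_eq_ite (fun _ => rfl) v

lemma GM_mulVec (v : Fin (n + 1) → ℂ) (i : Fin n) : (GM n *ᵥ v) i = zeroExtend v (i + 1) :=
  mulVec_apply_of_row_eq_ite (fun _ => rfl) v

lemma FM_transpose_mulVec (w : Fin n → ℂ) (i : Fin (n + 1)) :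
    ((FM n)ᵀ *ᵥ w) i = zeroExtend w i :=
  mulVec_apply_of_row_eq_ite (fun j => by simp only [transpose_apply, FM, of_apply, eq_comm]) w

lemma GM_transpose_mulVec_zero (w : Fin n → ℂ) : ((GM n)ᵀ *ᵥ w) 0 = 0 := by
  simp [mulVec, dotProduct, GM]

lemma GM_transpose_mulVec_succ (w : Fin n → ℂ) (i : Fin n) :
    ((GM n)ᵀ *ᵥ w) i.succ = zeroExtend w i :=
  mulVec_apply_of_row_eq_ite
    (fun j => by simp only [transpose_apply, GM, of_apply, Fin.val_succ, add_left_inj, eq_comm]) w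

lemma FM_mulVec_add_GM_mulVec_eq_zero_iff (v v' : Fin (n + 1) → ℂ) :
    FM n *ᵥ v + GM n *ᵥ v' = 0 ↔ UpperRel n (zeroExtend v) (zeroExtend v') := by
  simp only [funext_iff, Pi.add_apply, FM_mulVec, GM_mulVec, Pi.zero_apply, Fin.forall_iff,
    UpperRel]

lemma FM_transpose_mulVec_add_GM_transpose_mulVec_eq_zero_iff (w w' : Fin n → ℂ) :
    (FM n)ᵀ *ᵥ w + (GM n)ᵀ *ᵥ w' = 0 ↔ LowerRel (zeroExtend w) (zeroExtend w') := by
  simp only [funext_iff, Fin.forall_fin_succ, Pi.add_apply, FM_transpose_mulVec,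
    GM_transpose_mulVec_zero, GM_transpose_mulVec_succ, Pi.zero_apply, add_zero, Fin.val_zero,
    Fin.val_succ, LowerRel]
  refine and_congr_right fun _ => ⟨fun h i => ?_, fun h i => h i⟩
  by_cases hi : i < n
  · exact h ⟨i, hi⟩
  · rw [zeroExtend_of_le w (by lia), zeroExtend_of_le w' (by lia), add_zero]

lemma reindex_mulVec_eq_zero_iff {l o R : Type*} [Fintype l] [Fintype o] [Semiring R] (e : l ≃ o)
    (M M' : Matrix l l R) (v v' : o → R) :
    reindex e e M *ᵥ v + reindex e e M' *ᵥ v' = 0 ↔ M *ᵥ (v ∘ e) + M' *ᵥ (v' ∘ e) = 0 := by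
  rw [reindex_apply, reindex_apply, submatrix_mulVec_equiv, submatrix_mulVec_equiv, Equiv.symm_symm,
    funext_iff, funext_iff, ← e.forall_congr_right]
  simp only [Pi.add_apply, Function.comp_apply, Equiv.symm_apply_apply, Pi.zero_apply]

lemma fromBlocks_mulVec_eq_zero_iff {l o R : Type*} [Fintype l] [Fintype o] [Semiring R]
    (M M' : Matrix o l R) (v v' : l ⊕ o → R) :
    fromBlocks 0 Mᵀ M 0 *ᵥ v + fromBlocks 0 M'ᵀ M' 0 *ᵥ v' = 0 ↔
      M *ᵥ (v ∘ Sum.inl) + M' *ᵥ (v' ∘ Sum.inl) = 0 ∧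
        Mᵀ *ᵥ (v ∘ Sum.inr) + M'ᵀ *ᵥ (v' ∘ Sum.inr) = 0 := by
  simp only [fromBlocks_mulVec, zero_mulVec, zero_add, add_zero, funext_iff, Sum.forall,
    Pi.add_apply, Sum.elim_inl, Sum.elim_inr, Pi.zero_apply, and_comm]

lemma L1M_mulVec_add_L2M_mulVec_eq_zero_iff (k : ℕ) (v v' : Fin (2 * k + 1) → ℂ) :
    L1M k *ᵥ v + L2M k *ᵥ v' = 0 ↔
      GlueRel (k + 1) (UpperRel k) LowerRel (zeroExtend v) (zeroExtend v') := by
  let e : Fin (k + 1) ⊕ Fin k ≃ Fin (2 * k + 1) :=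
    finSumFinEquiv.trans (finCongr (by omega))
  have hupper (w : Fin (2 * k + 1) → ℂ) (i : ℕ) (hi : i ≤ k) :
      zeroExtend (w ∘ e ∘ Sum.inl) i = zeroExtend w i := by
    rw [zeroExtend_of_lt _ (by lia), zeroExtend_of_lt _ (by lia)]
    rfl
  have hlower (w : Fin (2 * k + 1) → ℂ) :
      zeroExtend (w ∘ e ∘ Sum.inr) = fun i => zeroExtend w (k + 1 + i) := by
    ext i
    by_cases hi : i < k
    · rw [zeroExtend_of_lt _ hi, zeroExtend_of_lt _ (by lia)]
      rfl
    · rw [zeroExtend_of_le _ (by lia), zeroExtend_of_le _ (by lia)]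
  rw [L1M, L2M, reindex_mulVec_eq_zero_iff, fromBlocks_mulVec_eq_zero_iff,
    FM_mulVec_add_GM_mulVec_eq_zero_iff, FM_transpose_mulVec_add_GM_transpose_mulVec_eq_zero_iff]
  refine and_congr (forall₂_congr fun i hi => ?_) ?_
  · exact Iff.of_eq (congrArg₂ (· + · = 0) (hupper v i hi.le) (hupper v' (i + 1) hi))
  · exact Iff.of_eq (congrArg₂ LowerRel (hlower v) (hlower v'))

theorem CanType.mulVec_add_mulVec_eq_zero_iff (c : CanType) (v v' : Fin c.size → ℂ) :
    c.A *ᵥ v + c.B *ᵥ v' = 0 ↔ c.Rel (zeroExtend v) (zeroExtend v') := by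
  cases c with
  | H k lam => exact delM_mulVec_add_lamM_mulVec_eq_zero_iff lam v v'
  | K k =>
    rw [add_comm]
    exact delM_mulVec_add_lamM_mulVec_eq_zero_iff 0 v' v
  | L k => exact L1M_mulVec_add_L2M_mulVec_eq_zero_iff k v v'

end CanonicalEquations

section BlockEquations

variable {R : Type*} [Zero R] {m n : ℕ} {S V : Set (Matrix ℕ ℕ R × Matrix ℕ ℕ R)}

/-- The extension by zero of a matrix to `ℕ × ℕ`. -/
def zeroExtendMatrix (M : Matrix (Fin m) (Fin n) R) : Matrix ℕ ℕ R :=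
  fun i j => if h : i < m ∧ j < n then M ⟨i, h.1⟩ ⟨j, h.2⟩ else 0

lemma zeroExtendMatrix_val (M : Matrix (Fin m) (Fin n) R) (i : Fin m) (j : Fin n) :
    zeroExtendMatrix M i j = M i j := dif_pos ⟨i.isLt, j.isLt⟩

lemma zeroExtendMatrix_injective :
    Function.Injective (zeroExtendMatrix : Matrix (Fin m) (Fin n) R → Matrix ℕ ℕ R) :=
  fun M M' h => by
    ext i j
    rw [← zeroExtendMatrix_val M, h, zeroExtendMatrix_val]

lemma zeroExtendMatrix_of_le_left (M : Matrix (Fin m) (Fin n) R) {i j : ℕ} (hi : m ≤ i) :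
    zeroExtendMatrix M i j = 0 := dif_neg fun h => hi.not_gt h.1

lemma zeroExtendMatrix_of_le_right (M : Matrix (Fin m) (Fin n) R) {i j : ℕ} (hj : n ≤ j) :
    zeroExtendMatrix M i j = 0 := dif_neg fun h => hj.not_gt h.2

lemma zeroExtendMatrix_transpose (M : Matrix (Fin m) (Fin n) R) :
    zeroExtendMatrix Mᵀ = (zeroExtendMatrix M)ᵀ := by
  ext i j
  simp only [zeroExtendMatrix, transpose_apply, and_comm]

lemma zeroExtendMatrix_submatrix_val {z : Matrix ℕ ℕ R} (h₁ : ∀ i j, m ≤ i → z i j = 0)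
    (h₂ : ∀ i j, n ≤ j → z i j = 0) :
    zeroExtendMatrix (z.submatrix (Fin.val : Fin m → ℕ) (Fin.val : Fin n → ℕ)) = z := by
  ext i j
  rw [zeroExtendMatrix]
  split_ifs with h
  · rfl
  · rcases not_and_or.1 h with h | h
    · exact (h₁ i j (not_lt.1 h)).symm
    · exact (h₂ i j (not_lt.1 h)).symm

lemma zeroExtendMatrix_col_of_lt (M : Matrix (Fin m) (Fin n) R) {j : ℕ} (hj : j < n) :
    (fun i => zeroExtendMatrix M i j) = zeroExtend fun i => M i ⟨j, hj⟩ := by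
  ext i
  simp only [zeroExtendMatrix, zeroExtend, hj, and_true]

lemma isSymm_zeroExtendMatrix_iff (M : Matrix (Fin n) (Fin n) R) :
    (zeroExtendMatrix M).IsSymm ↔ M.IsSymm := by
  rw [IsSymm, ← zeroExtendMatrix_transpose, zeroExtendMatrix_injective.eq_iff, IsSymm]

lemma IsCoordinateSet.restrict {s₁ s₂ : ℕ → ℕ → Prop}
    (h : IsCoordinateSet S V {x | x.1 < m ∧ x.2 < n ∧ s₁ x.1 x.2}
      {x | x.1 < m ∧ x.2 < n ∧ s₂ x.1 x.2})
    (hleft : ∀ y ∈ S, ∀ i j, m ≤ i → y.1 i j = 0 ∧ y.2 i j = 0)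
    (hright : ∀ y ∈ S, ∀ i j, n ≤ j → y.1 i j = 0 ∧ y.2 i j = 0) :
    IsCoordinateSet {p : Matrix (Fin m) (Fin n) R × Matrix (Fin m) (Fin n) R |
        (zeroExtendMatrix p.1, zeroExtendMatrix p.2) ∈ S}
      {e | (zeroExtendMatrix e.1, zeroExtendMatrix e.2) ∈ V}
      {x | s₁ x.1 x.2} {x | s₂ x.1 x.2} where
  eq_zero p hp h₁ h₂ := by
    have hzero := h.eq_zero _ hp
      (fun i j hij => (zeroExtendMatrix_val p.1 ⟨i, hij.1⟩ ⟨j, hij.2.1⟩).trans (h₁ _ _ hij.2.2))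
      (fun i j hij => (zeroExtendMatrix_val p.2 ⟨i, hij.1⟩ ⟨j, hij.2.1⟩).trans (h₂ _ _ hij.2.2))
    ext i j
    · exact (zeroExtendMatrix_val p.1 i j).symm.trans (congrFun₂ (congrArg Prod.fst hzero) i j)
    · exact (zeroExtendMatrix_val p.2 i j).symm.trans (congrFun₂ (congrArg Prod.snd hzero) i j)
  exists_eq e he := by
    obtain ⟨y, hy, h₁, h₂⟩ := h.exists_eq _ he
    refine ⟨(y.1.submatrix Fin.val Fin.val, y.2.submatrix Fin.val Fin.val), ?_,
      fun i j hij => ?_, fun i j hij => ?_⟩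
    · have hy₁ := zeroExtendMatrix_submatrix_val (fun i j hi => (hleft y hy i j hi).1)
        (fun i j hj => (hright y hy i j hj).1)
      have hy₂ := zeroExtendMatrix_submatrix_val (fun i j hi => (hleft y hy i j hi).2)
        (fun i j hj => (hright y hy i j hj).2)
      rwa [Set.mem_ofPred_eq, hy₁, hy₂]
    · exact (h₁ i j ⟨i.isLt, j.isLt, hij⟩).trans (zeroExtendMatrix_val e.1 i j)
    · exact (h₂ i j ⟨i.isLt, j.isLt, hij⟩).trans (zeroExtendMatrix_val e.2 i j)

/-- The equations satisfied by the off-diagonal block of an element of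
`tangentAnnihilator (A ⊕ C) (B ⊕ D)`. -/
def blockAnnihilator {ι κ : Type} [Fintype ι] [Fintype κ] (A B : Matrix ι ι ℂ)
    (C D : Matrix κ κ ℂ) : Set (Matrix ι κ ℂ × Matrix ι κ ℂ) :=
  {p | A * p.1 + B * p.2 = 0 ∧ C * p.1ᵀ + D * p.2ᵀ = 0}

lemma CanType.mul_add_mul_eq_zero_iff (c : CanType) (M M' : Matrix (Fin c.size) (Fin n) ℂ) :
    c.A * M + c.B * M' = 0 ↔
      ∀ j, c.Rel (fun i => zeroExtendMatrix M i j) (fun i => zeroExtendMatrix M' i j) := by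
  have hcol : c.A * M + c.B * M' = 0 ↔
      ∀ j, c.A *ᵥ (fun i => M i j) + c.B *ᵥ (fun i => M' i j) = 0 := by
    simp only [← ext_iff, funext_iff]
    exact forall_comm
  have hzero : c.Rel 0 0 := by
    have := (c.mulVec_add_mulVec_eq_zero_iff 0 0).1 (by rw [mulVec_zero, mulVec_zero, add_zero])
    rwa [zeroExtend_zero] at this
  rw [hcol]
  refine ⟨fun h j => ?_, fun h j => ?_⟩
  · by_cases hj : j < n
    · rw [zeroExtendMatrix_col_of_lt M hj, zeroExtendMatrix_col_of_lt M' hj]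
      exact (c.mulVec_add_mulVec_eq_zero_iff _ _).1 (h ⟨j, hj⟩)
    · simp only [zeroExtendMatrix_of_le_right _ (not_lt.1 hj)]
      exact hzero
  · have := h j
    rw [zeroExtendMatrix_col_of_lt M j.isLt, zeroExtendMatrix_col_of_lt M' j.isLt] at this
    exact (c.mulVec_add_mulVec_eq_zero_iff _ _).2 this

lemma isStripSol_zeroExtendMatrix_iff (c d : CanType)
    (p : Matrix (Fin c.size) (Fin d.size) ℂ × Matrix (Fin c.size) (Fin d.size) ℂ) :
    IsStripSol c.size d.size c.Rel d.Rel (zeroExtendMatrix p.1, zeroExtendMatrix p.2) ↔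
      p ∈ blockAnnihilator c.A c.B d.A d.B := by
  rw [blockAnnihilator, Set.mem_ofPred_eq, c.mul_add_mul_eq_zero_iff, d.mul_add_mul_eq_zero_iff,
    zeroExtendMatrix_transpose, zeroExtendMatrix_transpose]
  exact ⟨fun h => ⟨h.col, h.row⟩, fun h =>
    ⟨fun _ _ hi => ⟨zeroExtendMatrix_of_le_left _ hi, zeroExtendMatrix_of_le_left _ hi⟩,
      fun _ _ hj => ⟨zeroExtendMatrix_of_le_right _ hj, zeroExtendMatrix_of_le_right _ hj⟩,
      h.1, h.2⟩⟩

theorem isCoordinateSet_blockAnnihilator (c d : CanType) :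
    IsCoordinateSet (blockAnnihilator c.A c.B d.A d.B) Set.univ
      {x | offSupp1 c d x.1 x.2} {x | offSupp2 c d x.1 x.2} := by
  simpa only [Set.mem_ofPred_eq, isStripSol_zeroExtendMatrix_iff, Set.ofPred_mem_eq, Set.mem_univ,
    Set.ofPred_true] using (stripCoordinates_offSupp c d).restrict
      (fun y hy => hy.zero_of_le_left) (fun y hy => hy.zero_of_le_right)

theorem isCoordinateSet_tangentAnnihilator (c : CanType) :
    IsCoordinateSet (tangentAnnihilator c.A c.B) (SymPair (Fin c.size))
      {x | diagSupp1 c x.1 x.2} {x | diagSupp2 c x.1 x.2} := by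
  have hsols : {p | (zeroExtendMatrix p.1, zeroExtendMatrix p.2) ∈ c.symmStripSols} =
      tangentAnnihilator c.A c.B := by
    ext p
    rw [Set.mem_ofPred_eq, CanType.symmStripSols, Set.mem_ofPred_eq,
      isStripSol_zeroExtendMatrix_iff, isSymm_zeroExtendMatrix_iff, isSymm_zeroExtendMatrix_iff]
    refine ⟨fun h => ⟨h.2, h.1.1⟩, fun h => ⟨⟨h.2, ?_⟩, h.1⟩⟩
    rw [h.1.1, h.1.2]
    exact h.2
  have hvals : {e : Matrix (Fin c.size) (Fin c.size) ℂ × Matrix (Fin c.size) (Fin c.size) ℂ |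
      (zeroExtendMatrix e.1, zeroExtendMatrix e.2) ∈ {e | e.1.IsSymm ∧ e.2.IsSymm}} =
        SymPair (Fin c.size) := by
    ext e
    exact and_congr (isSymm_zeroExtendMatrix_iff e.1) (isSymm_zeroExtendMatrix_iff e.2)
  rw [← hsols, ← hvals]
  exact (isCoordinateSet_diagSupp c).restrict (fun y hy => hy.1.zero_of_le_left)
    (fun y hy => hy.1.zero_of_le_right)

end BlockEquations

section SymmetricBlocks

variable {o : Type*} [LinearOrder o] {n : o → Type*} {R : Type*}

/-- The symmetric block matrix with diagonal blocks `D i` and blocks `O i j` above the diagonal. -/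
def symmetricBlocks [Zero R] (D : ∀ i, Matrix (n i) (n i) R) (O : ∀ i j, Matrix (n i) (n j) R) :
    Matrix (Σ i, n i) (Σ i, n i) R :=
  fun x y => if x.1 < y.1 then O x.1 y.1 x.2 y.2 else
    if y.1 < x.1 then O y.1 x.1 y.2 x.2 else blockDiagonal' D x y

lemma symmetricBlocks_apply_eq [Zero R] (D : ∀ i, Matrix (n i) (n i) R)
    (O : ∀ i j, Matrix (n i) (n j) R) (i : o) (a b : n i) :
    symmetricBlocks D O ⟨i, a⟩ ⟨i, b⟩ = D i a b := by
  rw [symmetricBlocks, if_neg (lt_irrefl _), if_neg (lt_irrefl _), blockDiagonal'_apply_eq]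

lemma symmetricBlocks_apply_of_lt [Zero R] (D : ∀ i, Matrix (n i) (n i) R)
    (O : ∀ i j, Matrix (n i) (n j) R) {i j : o} (hij : i < j) (a : n i) (b : n j) :
    symmetricBlocks D O ⟨i, a⟩ ⟨j, b⟩ = O i j a b := if_pos hij

lemma isSymm_symmetricBlocks [Zero R] {D : ∀ i, Matrix (n i) (n i) R} (hD : ∀ i, (D i).IsSymm)
    (O : ∀ i j, Matrix (n i) (n j) R) : (symmetricBlocks D O).IsSymm := by
  ext x y
  rw [transpose_apply, symmetricBlocks, symmetricBlocks]
  rcases lt_trichotomy x.1 y.1 with h | h | h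
  · simp only [h, h.not_gt, if_true, if_false]
  · simp only [h, lt_irrefl, if_false]
    exact (IsSymm.ext_iff.1 ((blockDiagonal'_transpose D).trans
      (congrArg blockDiagonal' (funext hD)))) x y
  · simp only [h, h.not_gt, if_true, if_false]

/-- A symmetric set of positions in a block matrix, whose positions in the `i`-th diagonal block are
`D i` and whose positions in the block `(i, j)` above the diagonal are `O i j`. -/
structure IsSymmetricBlockSet (I : Set ((Σ i, n i) × (Σ i, n i))) (D : ∀ i, Set (n i × n i))
    (O : ∀ i j, Set (n i × n j)) : Prop where
  diag_iff : ∀ i a b, (⟨i, a⟩, ⟨i, b⟩) ∈ I ↔ (a, b) ∈ D i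
  upper_iff : ∀ i j, i < j → ∀ a b, (⟨i, a⟩, ⟨j, b⟩) ∈ I ↔ (a, b) ∈ O i j
  swap_mem : ∀ x y, (x, y) ∈ I → (y, x) ∈ I

lemma isSymmetricBlockSet_univ :
    IsSymmetricBlockSet (Set.univ : Set ((Σ i, n i) × (Σ i, n i))) (fun _ => Set.univ)
      fun _ _ => Set.univ :=
  ⟨fun _ _ _ => Iff.rfl, fun _ _ _ _ _ => Iff.rfl, fun _ _ h => h⟩

lemma IsSymmetricBlockSet.apply_eq {I : Set ((Σ i, n i) × (Σ i, n i))} {D : ∀ i, Set (n i × n i)}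
    {O : ∀ i j, Set (n i × n j)} (hI : IsSymmetricBlockSet I D O)
    {M N : Matrix (Σ i, n i) (Σ i, n i) R} (hM : M.IsSymm) (hN : N.IsSymm)
    (hdiag : ∀ i a b, (a, b) ∈ D i → M ⟨i, a⟩ ⟨i, b⟩ = N ⟨i, a⟩ ⟨i, b⟩)
    (hupper : ∀ i j, i < j → ∀ a b, (a, b) ∈ O i j → M ⟨i, a⟩ ⟨j, b⟩ = N ⟨i, a⟩ ⟨j, b⟩)
    (x y : Σ i, n i) (hxy : (x, y) ∈ I) : M x y = N x y := by
  obtain ⟨i, a⟩ := x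
  obtain ⟨j, b⟩ := y
  rcases lt_trichotomy i j with h | rfl | h
  · exact hupper i j h a b ((hI.upper_iff i j h a b).1 hxy)
  · exact hdiag i a b ((hI.diag_iff i a b).1 hxy)
  · rw [← hM.apply, ← hN.apply]
    exact hupper j i h b a ((hI.upper_iff j i h b a).1 (hI.swap_mem _ _ hxy))

end SymmetricBlocks

section DirectSums

variable {o : Type} [Fintype o] [LinearOrder o] {n : o → Type} [∀ i, Fintype (n i)]

lemma submatrix_blockDiagonal'_mul {R : Type*} [Semiring R] (A : ∀ i, Matrix (n i) (n i) R)
    (M : Matrix (Σ i, n i) (Σ i, n i) R) (i j : o) :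
    (blockDiagonal' A * M).submatrix (Sigma.mk i) (Sigma.mk j) =
      A i * M.submatrix (Sigma.mk i) (Sigma.mk j) := by
  ext a b
  rw [submatrix_apply, mul_apply, Fintype.sum_sigma, Finset.sum_eq_single_of_mem i
    (Finset.mem_univ i)]
  · simp only [blockDiagonal'_apply_eq, mul_apply, submatrix_apply]
  · exact fun k _ hk => Finset.sum_eq_zero fun x _ => by
      rw [blockDiagonal'_apply_ne _ _ _ hk.symm, zero_mul]

lemma blockDiagonal'_mul_add_eq_zero_iff {R : Type*} [Semiring R]
    (A B : ∀ i, Matrix (n i) (n i) R) (M N : Matrix (Σ i, n i) (Σ i, n i) R) :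
    blockDiagonal' A * M + blockDiagonal' B * N = 0 ↔
      ∀ i j, A i * M.submatrix (Sigma.mk i) (Sigma.mk j) +
        B i * N.submatrix (Sigma.mk i) (Sigma.mk j) = 0 := by
  simp only [← submatrix_blockDiagonal'_mul]
  exact ⟨fun h i j => congrArg (fun M => M.submatrix (Sigma.mk i) (Sigma.mk j)) h,
    fun h => ext fun x y => congrFun₂ (h x.1 y.1) x.2 y.2⟩

/-- The block `(i, j)` of a pair of block matrices. -/
def pairBlock {R : Type*} (p : Matrix (Σ i, n i) (Σ i, n i) R × Matrix (Σ i, n i) (Σ i, n i) R)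
    (i j : o) : Matrix (n i) (n j) R × Matrix (n i) (n j) R :=
  (p.1.submatrix (Sigma.mk i) (Sigma.mk j), p.2.submatrix (Sigma.mk i) (Sigma.mk j))

variable {A B : ∀ i, Matrix (n i) (n i) ℂ}

lemma mem_tangentAnnihilator_blockDiagonal'_iff
    {p : Matrix (Σ i, n i) (Σ i, n i) ℂ × Matrix (Σ i, n i) (Σ i, n i) ℂ}
    (hp : p ∈ SymPair (Σ i, n i)) :
    p ∈ tangentAnnihilator (blockDiagonal' A) (blockDiagonal' B) ↔
      (∀ i, pairBlock p i i ∈ tangentAnnihilator (A i) (B i)) ∧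
        ∀ i j, i < j → pairBlock p i j ∈ blockAnnihilator (A i) (B i) (A j) (B j) := by
  have htranspose₁ (i j : o) : (pairBlock p i j).1ᵀ = (pairBlock p j i).1 := by
    rw [pairBlock, pairBlock, transpose_submatrix, hp.1.eq]
  have htranspose₂ (i j : o) : (pairBlock p i j).2ᵀ = (pairBlock p j i).2 := by
    rw [pairBlock, pairBlock, transpose_submatrix, hp.2.eq]
  have hsymm (i : o) : pairBlock p i i ∈ SymPair (n i) := ⟨htranspose₁ i i, htranspose₂ i i⟩
  have hblock : p ∈ tangentAnnihilator (blockDiagonal' A) (blockDiagonal' B) ↔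
      ∀ i j, A i * (pairBlock p i j).1 + B i * (pairBlock p i j).2 = 0 :=
    (and_iff_right hp).trans (blockDiagonal'_mul_add_eq_zero_iff A B p.1 p.2)
  rw [hblock]
  refine ⟨fun h => ⟨fun i => ⟨hsymm i, h i i⟩, fun i j _ => ⟨h i j, ?_⟩⟩, fun h i j => ?_⟩
  · rw [htranspose₁, htranspose₂]
    exact h j i
  · rcases lt_trichotomy i j with hij | rfl | hij
    · exact (h.2 i j hij).1
    · exact (h.1 i).2
    · rw [← htranspose₁, ← htranspose₂]
      exact (h.2 j i hij).2

variable {D₁ D₂ : ∀ i, Set (n i × n i)} {O₁ O₂ : ∀ i j, Set (n i × n j)}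
  {I₁ I₂ : Set ((Σ i, n i) × (Σ i, n i))}

lemma eq_zero_of_mem_tangentAnnihilator_blockDiagonal'
    (hD : ∀ i, IsCoordinateSet (tangentAnnihilator (A i) (B i)) (SymPair (n i)) (D₁ i) (D₂ i))
    (hO : ∀ i j, i < j → IsCoordinateSet (blockAnnihilator (A i) (B i) (A j) (B j)) Set.univ
      (O₁ i j) (O₂ i j))
    (hI₁ : IsSymmetricBlockSet I₁ D₁ O₁) (hI₂ : IsSymmetricBlockSet I₂ D₂ O₂)
    {p : Matrix (Σ i, n i) (Σ i, n i) ℂ × Matrix (Σ i, n i) (Σ i, n i) ℂ}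
    (hp : p ∈ tangentAnnihilator (blockDiagonal' A) (blockDiagonal' B))
    (h₁ : ∀ x y, (x, y) ∈ I₁ → p.1 x y = 0) (h₂ : ∀ x y, (x, y) ∈ I₂ → p.2 x y = 0) : p = 0 := by
  obtain ⟨hdiag, hupper⟩ := (mem_tangentAnnihilator_blockDiagonal'_iff hp.1).1 hp
  have hdiag₀ (i : o) : pairBlock p i i = 0 :=
    (hD i).eq_zero _ (hdiag i) (fun a b hab => h₁ _ _ ((hI₁.diag_iff i a b).2 hab))
      fun a b hab => h₂ _ _ ((hI₂.diag_iff i a b).2 hab)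
  have hupper₀ (i j : o) (hij : i < j) : pairBlock p i j = 0 :=
    (hO i j hij).eq_zero _ (hupper i j hij)
      (fun a b hab => h₁ _ _ ((hI₁.upper_iff i j hij a b).2 hab))
      fun a b hab => h₂ _ _ ((hI₂.upper_iff i j hij a b).2 hab)
  refine Prod.ext (ext fun x y => ?_) (ext fun x y => ?_)
  · exact isSymmetricBlockSet_univ.apply_eq hp.1.1 isSymm_zero
      (fun i a b _ => congrFun₂ (congrArg Prod.fst (hdiag₀ i)) a b)
      (fun i j hij a b _ => congrFun₂ (congrArg Prod.fst (hupper₀ i j hij)) a b) x y trivial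
  · exact isSymmetricBlockSet_univ.apply_eq hp.1.2 isSymm_zero
      (fun i a b _ => congrFun₂ (congrArg Prod.snd (hdiag₀ i)) a b)
      (fun i j hij a b _ => congrFun₂ (congrArg Prod.snd (hupper₀ i j hij)) a b) x y trivial

lemma exists_pairBlock_eq {d : ∀ i, Matrix (n i) (n i) ℂ × Matrix (n i) (n i) ℂ}
    (hd : ∀ i, d i ∈ SymPair (n i)) (q : ∀ i j, Matrix (n i) (n j) ℂ × Matrix (n i) (n j) ℂ) :
    ∃ p ∈ SymPair (Σ i, n i), (∀ i, pairBlock p i i = d i) ∧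
      ∀ i j, i < j → pairBlock p i j = q i j := by
  let O₁ (i j : o) := (q i j).1
  let O₂ (i j : o) := (q i j).2
  refine ⟨(symmetricBlocks (fun i => (d i).1) O₁, symmetricBlocks (fun i => (d i).2) O₂),
    ⟨isSymm_symmetricBlocks (fun i => (hd i).1) O₁, isSymm_symmetricBlocks (fun i => (hd i).2) O₂⟩,
    fun i => Prod.ext ?_ ?_, fun i j hij => Prod.ext ?_ ?_⟩
  · exact ext (symmetricBlocks_apply_eq _ O₁ i)
  · exact ext (symmetricBlocks_apply_eq _ O₂ i)
  · exact ext (symmetricBlocks_apply_of_lt _ O₁ hij)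
  · exact ext (symmetricBlocks_apply_of_lt _ O₂ hij)

theorem isCoordinateSet_tangentAnnihilator_blockDiagonal'
    (hD : ∀ i, IsCoordinateSet (tangentAnnihilator (A i) (B i)) (SymPair (n i)) (D₁ i) (D₂ i))
    (hO : ∀ i j, i < j → IsCoordinateSet (blockAnnihilator (A i) (B i) (A j) (B j)) Set.univ
      (O₁ i j) (O₂ i j))
    (hI₁ : IsSymmetricBlockSet I₁ D₁ O₁) (hI₂ : IsSymmetricBlockSet I₂ D₂ O₂) :
    IsCoordinateSet (tangentAnnihilator (blockDiagonal' A) (blockDiagonal' B))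
      (SymPair (Σ i, n i)) I₁ I₂ := by
  refine ⟨fun p hp => eq_zero_of_mem_tangentAnnihilator_blockDiagonal' hD hO hI₁ hI₂ hp,
    fun e he => ?_⟩
  have hdiag (i : o) := (hD i).exists_eq (pairBlock e i i)
    ⟨he.1.submatrix _, he.2.submatrix _⟩
  have hupper (i j : o) : ∃ q, i < j → q ∈ blockAnnihilator (A i) (B i) (A j) (B j) ∧
      (∀ a b, (a, b) ∈ O₁ i j → q.1 a b = e.1 ⟨i, a⟩ ⟨j, b⟩) ∧
        ∀ a b, (a, b) ∈ O₂ i j → q.2 a b = e.2 ⟨i, a⟩ ⟨j, b⟩ := by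
    by_cases hij : i < j
    · obtain ⟨q, hq⟩ := (hO i j hij).exists_eq (pairBlock e i j) trivial
      exact ⟨q, fun _ => hq⟩
    · exact ⟨0, fun h => absurd h hij⟩
  choose d hd hd₁ hd₂ using hdiag
  choose q hq using hupper
  obtain ⟨p, hp, hpd, hpq⟩ := exists_pairBlock_eq (fun i => (hd i).1) q
  refine ⟨p, (mem_tangentAnnihilator_blockDiagonal'_iff hp).2
    ⟨fun i => (hpd i).symm ▸ hd i, fun i j hij => (hpq i j hij).symm ▸ (hq i j hij).1⟩, ?_, ?_⟩
  · exact hI₁.apply_eq hp.1 he.1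
      (fun i a b hab => (congrFun₂ (congrArg Prod.fst (hpd i)) a b).trans (hd₁ i a b hab))
      fun i j hij a b hab =>
        (congrFun₂ (congrArg Prod.fst (hpq i j hij)) a b).trans ((hq i j hij).2.1 a b hab)
  · exact hI₂.apply_eq hp.2 he.2
      (fun i a b hab => (congrFun₂ (congrArg Prod.snd (hpd i)) a b).trans (hd₂ i a b hab))
      fun i j hij a b hab =>
        (congrFun₂ (congrArg Prod.snd (hpq i j hij)) a b).trans ((hq i j hij).2.2 a b hab)

end DirectSums

section CanonicalPositions

lemma diagSupp1_comm (c : CanType) (p q : ℕ) : diagSupp1 c p q ↔ diagSupp1 c q p := by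
  cases c <;> grind [diagSupp1]

lemma diagSupp2_comm (c : CanType) (p q : ℕ) : diagSupp2 c p q ↔ diagSupp2 c q p := by
  cases c <;> grind [diagSupp2]

variable {t : ℕ} (X : Fin t → CanType)

lemma isSymmetricBlockSet_canI1 :
    IsSymmetricBlockSet (canI1 X) (fun i => {x | diagSupp1 (X i) x.1 x.2})
      fun i j => {x | offSupp1 (X i) (X j) x.1 x.2} where
  diag_iff i a b := by
    simp only [canI1, Set.mem_ofPred_eq, lt_irrefl, true_and, false_and, or_false]
  upper_iff i j hij a b := by
    simp only [canI1, Set.mem_ofPred_eq, hij, hij.ne, hij.not_gt, true_and, false_and, or_false,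
      false_or]
  swap_mem := by
    rintro ⟨i, a⟩ ⟨j, b⟩ (⟨hij, h⟩ | h | h)
    · obtain rfl : i = j := hij
      exact .inl ⟨rfl, (diagSupp1_comm _ _ _).1 h⟩
    · exact .inr (.inr h)
    · exact .inr (.inl h)

lemma isSymmetricBlockSet_canI2 :
    IsSymmetricBlockSet (canI2 X) (fun i => {x | diagSupp2 (X i) x.1 x.2})
      fun i j => {x | offSupp2 (X i) (X j) x.1 x.2} where
  diag_iff i a b := by
    simp only [canI2, Set.mem_ofPred_eq, lt_irrefl, true_and, false_and, or_false]
  upper_iff i j hij a b := by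
    simp only [canI2, Set.mem_ofPred_eq, hij, hij.ne, hij.not_gt, true_and, false_and, or_false,
      false_or]
  swap_mem := by
    rintro ⟨i, a⟩ ⟨j, b⟩ (⟨hij, h⟩ | h | h)
    · obtain rfl : i = j := hij
      exact .inl ⟨rfl, (diagSupp2_comm _ _ _).1 h⟩
    · exact .inr (.inr h)
    · exact .inr (.inl h)

theorem isCoordinateSet_canI :
    IsCoordinateSet (tangentAnnihilator (blockDiagonal' fun i => (X i).A)
      (blockDiagonal' fun i => (X i).B)) (SymPair (Σ i, Fin (X i).size))
      (canI1 X) (canI2 X) :=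
  isCoordinateSet_tangentAnnihilator_blockDiagonal'
    (fun i => isCoordinateSet_tangentAnnihilator (X i))
    (fun i j _ => isCoordinateSet_blockAnnihilator (X i) (X j))
    (isSymmetricBlockSet_canI1 X) (isSymmetricBlockSet_canI2 X)

end CanonicalPositions

/-- **Main theorem.** For a canonical pair
`(A,B)_can = X₁ ⊕ ⋯ ⊕ X_t` of symmetric complex matrices under congruence, the space
`Sym × Sym` is the direct sum of the tangent space `T((A,B)_can)` and the pattern space
`𝒟(ℂ)` described in Theorem 2; equivalently, the deformation
`(X,Y) ↦ (A_can + X, B_can + Y)` parametrized by `𝒟(ℂ)` is a (simplest) miniversal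
deformation of `(A,B)_can` under congruence. -/
theorem main_miniversal_deformation {t : ℕ} (X : Fin t → CanType)
    (hX : ∀ i, 0 < (X i).param) :
    (Disjoint
        (TSpace (Matrix.blockDiagonal' fun i => (X i).A)
          (Matrix.blockDiagonal' fun i => (X i).B))
        (Pattern (canI1 X) (canI2 X)) ∧
      TSpace (Matrix.blockDiagonal' fun i => (X i).A)
          (Matrix.blockDiagonal' fun i => (X i).B) ⊔
        Pattern (canI1 X) (canI2 X) = SymPair (Σ i, Fin (X i).size)) ∧
    IsMiniversal (patternDeformation
      (Matrix.blockDiagonal' fun i => (X i).A)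
      (Matrix.blockDiagonal' fun i => (X i).B)
      (blockDiagonal'_isSymm _ fun i => canA_isSymm (X i))
      (blockDiagonal'_isSymm _ fun i => canB_isSymm (X i))
      (Pattern (canI1 X) (canI2 X)) (Pattern_le _ _)) := by
  have hA := blockDiagonal'_isSymm _ fun i => canA_isSymm (X i)
  have hB := blockDiagonal'_isSymm _ fun i => canB_isSymm (X i)
  have hcoord := isCoordinateSet_canI X
  have hdisj := disjoint_TSpace_Pattern hA hB hcoord
  have hsup := TSpace_sup_Pattern hA hB (isSymmetricBlockSet_canI1 X).swap_mem
    (isSymmetricBlockSet_canI2 X).swap_mem hcoord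
  exact ⟨⟨hdisj, hsup⟩, isMiniversal_patternDeformation hdisj hsup⟩

end
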